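/- Let r be an even positive integer, let 𝒫 be the set of separable polynomials P ∈ ℤ[T] of degree r or r−1 whose content is squarefree, and for H ≥ 1 let 𝒫_H be the subset of those of height at most H. Then there exists a subset S of 𝒫 such that: (a) |S ∩ 𝒫_H| / |𝒫_H| = 1 − O(log H / √H) as H → ∞; and (b) for every P ∈ S, writing a for the leading coefficient of P, there exists a constant α with 0 < α < 1 such that the number of squarefree integers d ∉ {0,1} with |d| ≤ x for which either there exists t₀ ∈ ℚ with P(t₀) ≠ 0 and d·P(t₀) a nonzero square in ℚ, or deg P = r (even) and d·a is a nonzero square in ℚ, is O(x · (log x)^{−α}) as x → ∞. -/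

import Mathlib

/-!
The set `S` consists of the polynomials of degree exactly `r` in `P2Set r` that are irreducible
over `ℚ` (`irrSet`).

**Density of `S`.** Outside `S` there are the polynomials of degree `r - 1`, which are `O(H ^ r)` in
number, and those of degree `r` that are reducible over `ℚ`. By Gauss's lemma the latter factor as
`Q * R` over `ℤ`, and multiplicativity of the Mahler measure gives `ht Q * ht R = O(H)`; a dyadic
decomposition according to `ht Q` counts `O(H ^ r log H)` of them (`ncard_reducibleSet_le`). As a
positive proportion of all polynomials has squarefree content (`ncard_nonSqfSet_le`), `P2Set r`
has at least `c H ^ (r + 1)` members of height at most `H`, and the exceptional proportion is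
`O(log H / H)`, which is stronger than required.

**Specializations of a member of `S`.** If `d` is squarefree and `d P(u / v)` is a square, then, `r`
being even, every prime divisor `p` of `d` divides `v ^ r P(u / v)`; hence `p` divides the leading
coefficient of `P` or `P` has a root modulo `p` (`root_mod_of_specialization`). Such primes have
upper Dirichlet density less than one (`density_roots_lt_one`): up to finitely many they lie below a
degree-one prime of `K = ℚ[X] / (P)`; the degree-one primes of `K` contribute at most
`log (1 / (s - 1)) + O(1)` to `∑ N(𝔭)^{-s}`, by the simple pole of the Dedekind zeta function; and a
set of rational primes of positive density, those below a degree-one prime of the splitting field,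
lies below at least two degree-one primes of `K`, because `P` has two distinct roots in the
splitting field. A squarefree integer composed of primes from a set of density at most `1 - β` is
rare: the number of those up to `x` is `O(x (log x) ^ (-β))` (`card_sqfWith_le`), by Chebyshev's bound
and an Euler product at `s = 1 + 1 / log x`.
-/

open Polynomial Filter Asymptotics

/-- The height of `P` (max of the absolute values of the coefficients) is at most `H`. -/
def HeightLE (P : Polynomial ℤ) (H : ℕ) : Prop := ∀ i, |P.coeff i| ≤ (H : ℤ)

/-- `d` is a squarefree integer with `d ∉ {0,1}`. -/
def SqfInt (d : ℤ) : Prop :=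
  d ≠ 0 ∧ d ≠ 1 ∧ ∀ p : ℕ, p.Prime → ¬ ((p : ℤ) ^ 2 ∣ d)

/-- Separable integer polynomials of degree `r` or `r-1` with squarefree content. -/
def P2Set (r : ℕ) : Set (Polynomial ℤ) :=
  {P | (P.natDegree = r ∨ P.natDegree = r - 1) ∧ P ≠ 0 ∧
    (P.map (Int.castRingHom ℚ)).Separable ∧ Squarefree P.content}

section Helpers

open NumberField Ideal Topology

/-! ### Dedekind zeta functions and Euler products -/

/-- The weight `I ↦ N(I)^{-s}` as a monoid homomorphism. -/
noncomputable def idealWeight (K : Type*) [Field K] [NumberField K] (s : ℝ) :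
    Ideal (𝓞 K) →* ℝ where
  toFun I := (absNorm I : ℝ) ^ (-s)
  map_one' := by simp
  map_mul' I J := by
    rw [map_mul, Nat.cast_mul, Real.mul_rpow (Nat.cast_nonneg _) (Nat.cast_nonneg _)]

section EulerProduct

variable {K : Type*} [Field K] [NumberField K]

lemma idealWeight_apply (s : ℝ) (I : Ideal (𝓞 K)) :
    idealWeight K s I = (absNorm I : ℝ) ^ (-s) := rfl

lemma idealWeight_nonneg (s : ℝ) (I : Ideal (𝓞 K)) : 0 ≤ idealWeight K s I := by
  rw [idealWeight_apply]; positivity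

/-- Unique factorization: products of powers of distinct primes determine the exponents. -/
lemma prod_pow_injective (F : Finset (Ideal (𝓞 K))) (hF : ∀ I ∈ F, I.IsPrime ∧ I ≠ ⊥) :
    Function.Injective fun e : F → ℕ => ∏ i : F, i.1 ^ e i := by
  classical
  intro e e' h
  have key : ∀ e : F → ℕ, UniqueFactorizationMonoid.normalizedFactors (∏ i : F, i.1 ^ e i) =
      ∑ i : F, e i • ({i.1} : Multiset (Ideal (𝓞 K))) := by
    intro e
    have h1 : ∏ i : F, i.1 ^ e i =
        (∑ i : F, e i • ({i.1} : Multiset (Ideal (𝓞 K)))).prod := by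
      rw [Multiset.prod_sum]
      refine Finset.prod_congr rfl fun i _ => ?_
      rw [Multiset.prod_nsmul, Multiset.prod_singleton]
    rw [h1]
    refine UniqueFactorizationMonoid.normalizedFactors_prod_of_prime fun p hp => ?_
    rw [Multiset.mem_sum] at hp
    obtain ⟨i, -, hi⟩ := hp
    have := Multiset.mem_of_mem_nsmul hi
    rw [Multiset.mem_singleton] at this
    subst this
    exact (Ideal.prime_iff_isPrime (hF _ i.2).2).2 (hF _ i.2).1
  have h2 := congrArg UniqueFactorizationMonoid.normalizedFactors h
  simp only [key] at h2
  have cnt : ∀ (e : F → ℕ) (j : F),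
      Multiset.count j.1 (∑ i : F, e i • ({i.1} : Multiset (Ideal (𝓞 K)))) = e j := by
    intro e j
    rw [Multiset.count_sum', Finset.sum_eq_single j]
    · simp
    · intro b _ hb
      rw [Multiset.count_nsmul, Multiset.count_singleton, if_neg, mul_zero]
      exact fun hh => hb (Subtype.ext hh.symm)
    · simp
  funext j
  rw [← cnt e j, ← cnt e' j, h2]

/-- Half of the Euler product: expanding `∏ (1 + x + x²)` over a finite set of primes gives
distinct ideals, and `exp x ≤ 1 + x + x²` on `[0, 1]`. -/
lemma exp_sum_primes_le (F : Finset (Ideal (𝓞 K))) (hF : ∀ I ∈ F, I.IsPrime ∧ I ≠ ⊥)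
    {s : ℝ} (hs : 1 < s) :
    ∃ T : Finset (Ideal (𝓞 K)), (∀ I ∈ T, I ≠ ⊥) ∧
      Real.exp (∑ I ∈ F, idealWeight K s I) ≤ ∑ I ∈ T, idealWeight K s I := by
  classical
  refine ⟨(Fintype.piFinset fun _ : F => Finset.range 3).image
    fun e => ∏ i : F, i.1 ^ e i, ?_, ?_⟩
  · intro I hI
    obtain ⟨e, -, rfl⟩ := Finset.mem_image.1 hI
    exact Finset.prod_ne_zero_iff.2 fun i _ => pow_ne_zero _ (hF _ i.2).2
  · rw [Finset.sum_image fun e _ e' _ h => prod_pow_injective F hF h]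
    simp only [map_prod, map_pow]
    rw [← Finset.prod_univ_sum (fun _ : F => Finset.range 3)
      (fun i j => idealWeight K s i.1 ^ j), Real.exp_sum, ← Finset.prod_coe_sort]
    refine Finset.prod_le_prod (fun i _ => (Real.exp_pos _).le) fun i _ => ?_
    have h0 := idealWeight_nonneg s i.1
    have h1 : idealWeight K s i.1 ≤ 1 := by
      rw [idealWeight_apply]
      refine Real.rpow_le_one_of_one_le_of_nonpos ?_ (by linarith)
      exact_mod_cast Nat.one_le_iff_ne_zero.2 (by
        rw [Ne, Ideal.absNorm_eq_zero_iff]; exact (hF _ i.2).2)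
    have := (abs_le.1 (Real.abs_exp_sub_one_sub_id_le (abs_le.2 ⟨by linarith, h1⟩))).2
    simp only [Finset.sum_range_succ, Finset.sum_range_zero]
    linarith [pow_zero (idealWeight K s i.1), pow_one (idealWeight K s i.1)]

/-- The other half of the Euler product: by unique factorization, a finite sum over ideals is
contained in the expansion of a finite product of truncated geometric series over primes. -/
lemma sum_le_prod_primes (T : Finset (Ideal (𝓞 K))) (hT : ∀ I ∈ T, I ≠ ⊥) (s : ℝ) :
    ∃ (F : Finset (Ideal (𝓞 K))) (k : ℕ), (∀ I ∈ F, I.IsPrime ∧ I ≠ ⊥) ∧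
      ∑ I ∈ T, idealWeight K s I ≤
        ∏ I ∈ F, ∑ j ∈ Finset.range k, idealWeight K s I ^ j := by
  classical
  let nf := fun I : Ideal (𝓞 K) => UniqueFactorizationMonoid.normalizedFactors I
  let F := T.biUnion fun I => (nf I).toFinset
  let k := T.sup (fun I => (nf I).card) + 1
  refine ⟨F, k, ?_, ?_⟩
  · intro I hI
    obtain ⟨J, hJ, hIJ⟩ := Finset.mem_biUnion.1 hI
    have hp := UniqueFactorizationMonoid.prime_of_normalized_factor I (Multiset.mem_toFinset.1 hIJ)
    exact ⟨Ideal.isPrime_of_prime hp, hp.ne_zero⟩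
  · let e : Ideal (𝓞 K) → F → ℕ := fun I i => (nf I).count i.1
    have he : ∀ I ∈ T, I = ∏ i : F, i.1 ^ e I i := by
      intro I hI
      conv_lhs => rw [← Ideal.prod_normalizedFactors_eq_self (hT I hI)]
      rw [Finset.prod_multiset_count_of_subset _ F
        (Finset.subset_biUnion_of_mem (fun I => (nf I).toFinset) hI)]
      exact (Finset.prod_coe_sort F fun i => i ^ (nf I).count i).symm
    have hinj : Set.InjOn e T := by
      intro I hI J hJ h
      rw [he I hI, he J hJ, h]
    rw [← Finset.prod_coe_sort, Finset.prod_univ_sum]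
    calc ∑ I ∈ T, idealWeight K s I = ∑ I ∈ T, ∏ i : F, idealWeight K s i.1 ^ e I i := by
          refine Finset.sum_congr rfl fun I hI => ?_
          conv_lhs => rw [he I hI, map_prod]
          simp only [map_pow]
      _ = ∑ f ∈ T.image e, ∏ i : F, idealWeight K s i.1 ^ f i := by
          rw [Finset.sum_image hinj]
      _ ≤ _ := by
          refine Finset.sum_le_sum_of_subset_of_nonneg ?_ fun f _ _ =>
            Finset.prod_nonneg fun i _ => pow_nonneg (idealWeight_nonneg _ _) _
          intro f hf
          obtain ⟨I, hI, rfl⟩ := Finset.mem_image.1 hf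
          rw [Fintype.mem_piFinset]
          intro i
          rw [Finset.mem_range, Nat.lt_succ_iff]
          exact (Multiset.count_le_card _ _).trans
            (Finset.le_sup (f := fun I => (nf I).card) hI)

end EulerProduct

/-- The class number formula, reformulated for finite sums: near `s = 1⁺` the sums of `N(I)^{-s}`
over finite sets of nonzero ideals are bounded by a multiple of `1 / (s - 1)`, and this order of
magnitude is attained. -/
lemma zeta_bounds (K : Type*) [Field K] [NumberField K] :
    ∃ C : ℝ, 0 < C ∧ ∀ᶠ s : ℝ in 𝓝[>] 1,
      (∀ T : Finset (Ideal (𝓞 K)), (∀ I ∈ T, I ≠ ⊥) →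
        ∑ I ∈ T, idealWeight K s I ≤ C * (s - 1)⁻¹) ∧
      ∃ T : Finset (Ideal (𝓞 K)), (∀ I ∈ T, I ≠ ⊥) ∧
        C⁻¹ * (s - 1)⁻¹ ≤ ∑ I ∈ T, idealWeight K s I := by
  classical
  set ρ := dedekindZeta_residue K with hρ
  have hρ0 : 0 < ρ := dedekindZeta_residue_pos K
  have hlim := tendsto_sub_one_mul_dedekindZeta_nhdsGT K
  let a : ℕ → ℕ := fun n => Nat.card {I : Ideal (𝓞 K) // absNorm I = n}
  let g : ℝ → ℕ → ℝ := fun s n => if n = 0 then 0 else a n * (n : ℝ) ^ (-s)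
  have hg0 : ∀ s n, 0 ≤ g s n := by
    intro s n
    simp only [g]
    split_ifs
    · exact le_rfl
    · positivity
  have hterm : ∀ s : ℝ, dedekindZeta K s = ((∑' n, g s n : ℝ) : ℂ) := by
    intro s
    rw [dedekindZeta, LSeries, Complex.ofReal_tsum]
    refine tsum_congr fun n => ?_
    rw [LSeries.term_def]
    simp only [g]
    split_ifs with h
    · simp
    · rw [Real.rpow_neg (Nat.cast_nonneg _)]
      push_cast
      rw [Complex.ofReal_cpow (Nat.cast_nonneg _), div_eq_mul_inv]
      simp [a]
  have hlim' : Tendsto (fun s : ℝ => (s - 1) * ∑' n, g s n) (𝓝[>] 1) (𝓝 ρ) := by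
    have h := (Complex.continuous_re.tendsto _).comp hlim
    simp only [Complex.ofReal_re] at h
    refine h.congr fun s => ?_
    simp only [Function.comp]
    rw [hterm, ← Complex.ofReal_one, ← Complex.ofReal_sub, ← Complex.ofReal_mul,
      Complex.ofReal_re]
  -- A finite sum over `n` is a sum over the finite set of ideals with norm in that set.
  let T : Finset ℕ → Finset (Ideal (𝓞 K)) := fun N =>
    (N.erase 0).biUnion fun n => (finite_setOfPred_absNorm_eq (S := 𝓞 K) n).toFinset
  have hT : ∀ N, ∀ I, I ∈ T N ↔ absNorm I ∈ N ∧ I ≠ ⊥ := by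
    intro N I
    simp only [T, Finset.mem_biUnion, Finset.mem_erase, Set.Finite.mem_toFinset,
      Set.mem_ofPred_eq]
    constructor
    · rintro ⟨n, ⟨h0, hn⟩, rfl⟩
      exact ⟨hn, fun h => h0 (by rw [h, absNorm_bot])⟩
    · rintro ⟨h, h0⟩
      exact ⟨_, ⟨fun h' => h0 (absNorm_eq_zero_iff.1 h'), h⟩, rfl⟩
  have hsum : ∀ s N, ∑ I ∈ T N, idealWeight K s I = ∑ n ∈ N, g s n := by
    intro s N
    rw [Finset.sum_biUnion]
    · have h1 : ∀ n ∈ N.erase 0, ∑ I ∈ (finite_setOfPred_absNorm_eq (S := 𝓞 K) n).toFinset,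
          idealWeight K s I = g s n := by
        intro n hn
        have h2 : ∀ I ∈ (finite_setOfPred_absNorm_eq (S := 𝓞 K) n).toFinset,
            idealWeight K s I = (n : ℝ) ^ (-s) := by
          intro I hI
          rw [idealWeight_apply, (Set.Finite.mem_toFinset _).1 hI]
        rw [Finset.sum_congr rfl h2, Finset.sum_const, nsmul_eq_mul]
        simp only [g, if_neg (Finset.ne_of_mem_erase hn)]
        congr 2
        rw [← Set.ncard_eq_toFinset_card _ (finite_setOfPred_absNorm_eq (S := 𝓞 K) n)]
        rfl
      rw [Finset.sum_congr rfl h1]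
      exact Finset.sum_erase _ (by simp)
    · intro n _ m _ hnm
      rw [Function.onFun, Finset.disjoint_left]
      intro I hI hJ
      rw [Set.Finite.mem_toFinset] at hI hJ
      exact hnm (hI.symm.trans hJ)
  refine ⟨max (2 * ρ) (4 / ρ), by positivity, ?_⟩
  have hev : ∀ᶠ s : ℝ in 𝓝[>] 1, (s - 1) * ∑' n, g s n ∈ Set.Ioo (ρ / 2) (2 * ρ) :=
    hlim' (Ioo_mem_nhds (by linarith) (by linarith))
  filter_upwards [hev, self_mem_nhdsWithin] with s hs hs1
  have hs1' : 0 < s - 1 := sub_pos.2 hs1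
  have hsm : Summable (g s) := by
    by_contra h
    rw [tsum_eq_zero_of_not_summable h, mul_zero] at hs
    linarith [hs.1]
  have hZ1 : ∑' n, g s n < 2 * ρ * (s - 1)⁻¹ := by
    rw [← div_eq_mul_inv, lt_div_iff₀ hs1', mul_comm]; exact hs.2
  have hZ2 : ρ / 2 * (s - 1)⁻¹ < ∑' n, g s n := by
    rw [← div_eq_mul_inv, div_lt_iff₀ hs1', mul_comm]; exact hs.1
  constructor
  · intro T' hT'
    calc ∑ I ∈ T', idealWeight K s I ≤ ∑ I ∈ T (T'.image absNorm), idealWeight K s I := by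
          refine Finset.sum_le_sum_of_subset_of_nonneg ?_ fun _ _ _ => idealWeight_nonneg _ _
          intro I hI
          exact (hT _ _).2 ⟨Finset.mem_image_of_mem _ hI, hT' I hI⟩
      _ ≤ ∑' n, g s n := by
          rw [hsum]
          exact hsm.sum_le_tsum _ fun n _ => hg0 s n
      _ ≤ 2 * ρ * (s - 1)⁻¹ := hZ1.le
      _ ≤ _ := by gcongr; exact le_max_left _ _
  · obtain ⟨N, hN⟩ := (hsm.hasSum.eventually (lt_mem_nhds
      (show ρ / 4 * (s - 1)⁻¹ < ∑' n, g s n from lt_of_le_of_lt (by gcongr; norm_num) hZ2))).exists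
    refine ⟨T N, fun I hI => ((hT _ _).1 hI).2, ?_⟩
    rw [hsum]
    refine le_trans ?_ hN.le
    gcongr
    rw [inv_le_comm₀ (by positivity) (by positivity), inv_div]
    exact le_max_right _ _

/-! ### Primes of degree one -/

section PrimeIdeals

variable {K : Type*} [Field K] [NumberField K]

lemma absNorm_eq_prime_pow (I : Ideal (𝓞 K)) (hp : I.IsPrime) (h0 : I ≠ ⊥) :
    ∃ q f : ℕ, q.Prime ∧ 1 ≤ f ∧ absNorm I = q ^ f ∧ I ∣ Ideal.span {(q : 𝓞 K)} := by
  have hN0 : absNorm I ≠ 0 := fun h => h0 (absNorm_eq_zero_iff.1 h)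
  have hN1 : absNorm I ≠ 1 := fun h => hp.ne_top (absNorm_eq_one_iff.1 h)
  have hmem := Ideal.absNorm_mem I
  have h1 : ((absNorm I).primeFactorsList.map (fun p : ℕ => (p : 𝓞 K))).prod ∈ I := by
    have h2 : ((absNorm I).primeFactorsList.map (fun p : ℕ => (p : 𝓞 K))).prod =
        ((absNorm I : ℕ) : 𝓞 K) := by
      conv_rhs => rw [← Nat.prod_primeFactorsList hN0]
      rw [Nat.cast_list_prod]
    rw [h2]; exact hmem
  obtain ⟨x, hx, hxI⟩ := (Ideal.IsPrime.multiset_prod_mem_iff_exists_mem hp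
    (Multiset.ofList ((absNorm I).primeFactorsList.map (fun p : ℕ => (p : 𝓞 K))))).1
      (by simpa using h1)
  rw [Multiset.mem_coe, List.mem_map] at hx
  obtain ⟨q, hq, rfl⟩ := hx
  have hqp := Nat.prime_of_mem_primeFactorsList hq
  have hdvd : I ∣ Ideal.span {(q : 𝓞 K)} := by
    rw [Ideal.dvd_iff_le, Ideal.span_le, Set.singleton_subset_iff]; exact hxI
  have h3 : absNorm I ∣ q ^ Module.finrank ℤ (𝓞 K) := by
    rw [← Ideal.absNorm_span_natCast]
    exact map_dvd absNorm hdvd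
  obtain ⟨f, -, hf⟩ := (Nat.dvd_prime_pow hqp).1 h3
  refine ⟨q, f, hqp, ?_, hf, hdvd⟩
  rw [Nat.one_le_iff_ne_zero]
  rintro rfl
  exact hN1 (by simpa using hf)

/-- At most `[K : ℚ]` primes of `K` lie above a given rational prime: their product divides
`(q)`, whose norm is `q ^ [K : ℚ]`. -/
lemma card_primes_above_le (F : Finset (Ideal (𝓞 K))) (hF : ∀ I ∈ F, I.IsPrime ∧ I ≠ ⊥) (q : ℕ) :
    (F.filter fun I => (absNorm I).minFac = q).card ≤ Module.finrank ℤ (𝓞 K) := by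
  classical
  by_cases hq : (F.filter fun I => (absNorm I).minFac = q) = ∅
  · simp [hq]
  have key : ∀ I ∈ F.filter (fun I => (absNorm I).minFac = q),
      q.Prime ∧ q ≤ absNorm I ∧ I ∣ Ideal.span {(q : 𝓞 K)} := by
    intro I hI
    rw [Finset.mem_filter] at hI
    obtain ⟨p, f, hp, hf, hN, hd⟩ := absNorm_eq_prime_pow I (hF I hI.1).1 (hF I hI.1).2
    have : p = q := by rw [← hI.2, hN, hp.pow_minFac (by omega)]
    subst this
    exact ⟨hp, by rw [hN]; exact Nat.le_self_pow (by omega) p, hd⟩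
  obtain ⟨I₀, hI₀⟩ := Finset.nonempty_iff_ne_empty.2 hq
  have hqp := (key I₀ hI₀).1
  have hdvd : ∏ I ∈ F.filter (fun I => (absNorm I).minFac = q), I ∣ Ideal.span {(q : 𝓞 K)} := by
    refine Finset.prod_primes_dvd _ (fun I hI => ?_) fun I hI => (key I hI).2.2
    have := hF I (Finset.mem_filter.1 hI).1
    exact (Ideal.prime_iff_isPrime this.2).2 this.1
  have h1 : ∏ I ∈ F.filter (fun I => (absNorm I).minFac = q), absNorm I ∣
      q ^ Module.finrank ℤ (𝓞 K) := by
    rw [← Ideal.absNorm_span_natCast, ← map_prod]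
    exact map_dvd absNorm hdvd
  have h2 := Nat.le_of_dvd (pow_pos hqp.pos _) h1
  have h3 : q ^ (F.filter fun I => (absNorm I).minFac = q).card ≤
      ∏ I ∈ F.filter (fun I => (absNorm I).minFac = q), absNorm I :=
    Finset.pow_card_le_prod _ _ _ fun I hI => (key I hI).2.1
  exact (Nat.pow_le_pow_iff_right hqp.one_lt).1 (h3.trans h2)

end PrimeIdeals

lemma sum_prime_ideals_le (K : Type*) [Field K] [NumberField K] :
    ∃ C : ℝ, ∀ᶠ s : ℝ in 𝓝[>] 1, ∀ F : Finset (Ideal (𝓞 K)), (∀ I ∈ F, I.IsPrime ∧ I ≠ ⊥) →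
      ∑ I ∈ F, idealWeight K s I ≤ Real.log (s - 1)⁻¹ + C := by
  obtain ⟨C, hC, h⟩ := zeta_bounds K
  refine ⟨Real.log C, ?_⟩
  filter_upwards [h, self_mem_nhdsWithin] with s hs hs1 F hF
  have hs1' : 0 < s - 1 := sub_pos.2 hs1
  obtain ⟨T, hT, hle⟩ := exp_sum_primes_le F hF hs1
  have := hle.trans (hs.1 T hT)
  rw [← Real.log_exp (∑ I ∈ F, idealWeight K s I), add_comm,
    ← Real.log_mul hC.ne' (inv_pos.2 hs1').ne']
  exact Real.log_le_log (Real.exp_pos _) this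

lemma geom_sum_le_exp {x : ℝ} (h0 : 0 ≤ x) (h1 : x ≤ 1 / 2) (k : ℕ) :
    ∑ j ∈ Finset.range k, x ^ j ≤ Real.exp (x + 2 * x ^ 2) := by
  have h2 : ∑ j ∈ Finset.range k, x ^ j ≤ (1 - x)⁻¹ := by
    rw [← tsum_geometric_of_lt_one h0 (by linarith)]
    exact (summable_geometric_of_lt_one h0 (by linarith)).sum_le_tsum _
      fun _ _ => pow_nonneg h0 _
  have h3 : (1 - x)⁻¹ ≤ 1 + x + 2 * x ^ 2 := by
    rw [inv_le_iff_one_le_mul₀ (by linarith)]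
    nlinarith [mul_nonneg (sq_nonneg x) (by linarith : 0 ≤ 1 - 2 * x)]
  have := Real.add_one_le_exp (x + 2 * x ^ 2)
  linarith

/-- The rational primes lying below a prime of degree one of `L` have Dirichlet density at least
`1 / [L : ℚ]`: primes of higher degree contribute a bounded amount, and each rational prime lies
below at most `[L : ℚ]` primes. -/
lemma log_le_sum_degree_one (L : Type*) [Field L] [NumberField L] :
    ∃ C : ℝ, ∀ᶠ s : ℝ in 𝓝[>] 1, ∃ A : Finset ℕ,
      (∀ p ∈ A, p.Prime ∧ ∃ I : Ideal (𝓞 L), absNorm I = p) ∧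
      Real.log (s - 1)⁻¹ ≤
        (Module.finrank ℤ (𝓞 L) : ℝ) * ∑ p ∈ A, (p : ℝ) ^ (-s) + C := by
  classical
  obtain ⟨C, hC, h⟩ := zeta_bounds L
  set n := Module.finrank ℤ (𝓞 L) with hn
  have hsumm : Summable fun m : ℕ => ((m : ℝ) ^ 2)⁻¹ := by
    simp
  refine ⟨Real.log C + n * (3 * ∑' m : ℕ, ((m : ℝ) ^ 2)⁻¹), ?_⟩
  filter_upwards [h, self_mem_nhdsWithin] with s hs hs1
  replace hs1 : 1 < s := hs1
  have hs1' : 0 < s - 1 := sub_pos.2 hs1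
  obtain ⟨T, hT, hle⟩ := hs.2
  obtain ⟨F, k, hF, hFle⟩ := sum_le_prod_primes T hT s
  -- `hh q` dominates the contribution `w + 2 w²` of a prime ideal of weight `w` above `q`; the
  -- first summand occurs only for ideals of degree one, the second is summable over `q`.
  let hh : ℕ → ℝ := fun q =>
    (if ∃ I : Ideal (𝓞 L), absNorm I = q then (q : ℝ) ^ (-s) else 0) + 3 * ((q : ℝ) ^ 2)⁻¹
  have hw : ∀ I ∈ F, idealWeight L s I ≤ 1 / 2 ∧
      idealWeight L s I + 2 * idealWeight L s I ^ 2 ≤ hh (absNorm I).minFac ∧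
      (absNorm I).minFac.Prime := by
    intro I hI
    obtain ⟨q, f, hq, hf, hN, -⟩ := absNorm_eq_prime_pow I (hF I hI).1 (hF I hI).2
    have hmf : (absNorm I).minFac = q := by rw [hN, hq.pow_minFac (by omega)]
    rw [hmf]
    have hq2 : (2 : ℝ) ≤ q := by exact_mod_cast hq.two_le
    have hx : idealWeight L s I = ((q : ℝ) ^ (-s)) ^ f := by
      rw [idealWeight_apply, hN, Nat.cast_pow, ← Real.rpow_natCast, ← Real.rpow_natCast,
        ← Real.rpow_mul (by linarith), ← Real.rpow_mul (by linarith), mul_comm]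
    have hy0 : 0 ≤ (q : ℝ) ^ (-s) := by positivity
    have hy1 : (q : ℝ) ^ (-s) ≤ (q : ℝ)⁻¹ := by
      rw [← Real.rpow_neg_one]
      exact Real.rpow_le_rpow_of_exponent_le (by linarith) (by linarith)
    have hqi : (q : ℝ)⁻¹ ≤ 1 / 2 := by
      rw [inv_le_comm₀ (by linarith) (by norm_num)]; linarith
    set y := (q : ℝ) ^ (-s) with hy
    have hxy : idealWeight L s I ≤ y := by
      rw [hx]; exact pow_le_of_le_one hy0 (by linarith) (by omega)
    have hx0 := idealWeight_nonneg s I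
    have hy2 : y ^ 2 ≤ ((q : ℝ) ^ 2)⁻¹ := by
      rw [← inv_pow]; exact pow_le_pow_left₀ hy0 hy1 2
    refine ⟨by linarith, ?_, hq⟩
    have hx2 : idealWeight L s I ^ 2 ≤ ((q : ℝ) ^ 2)⁻¹ :=
      (pow_le_pow_left₀ hx0 hxy 2).trans hy2
    by_cases hf1 : f = 1
    · subst hf1
      simp only [hh]
      rw [if_pos ⟨I, by rw [hN, pow_one]⟩]
      linarith [pow_nonneg hx0 2]
    · have hx3 : idealWeight L s I ≤ ((q : ℝ) ^ 2)⁻¹ := by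
        rw [hx]
        exact (pow_le_pow_of_le_one hy0 (by linarith) (by omega : 2 ≤ f)).trans hy2
      have : 3 * ((q : ℝ) ^ 2)⁻¹ ≤ hh q := by
        simp only [hh]
        have : (0 : ℝ) ≤ if ∃ I : Ideal (𝓞 L), absNorm I = q then (q : ℝ) ^ (-s) else 0 := by
          split_ifs
          · positivity
          · exact le_rfl
        linarith
      linarith
  have hh0 : ∀ q, 0 ≤ hh q := by
    intro q
    simp only [hh]
    split_ifs <;> positivity
  let B := F.image fun I => (absNorm I).minFac
  refine ⟨B.filter fun q => ∃ I : Ideal (𝓞 L), absNorm I = q, ?_, ?_⟩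
  · intro p hp
    rw [Finset.mem_filter] at hp
    obtain ⟨I, hI, rfl⟩ := Finset.mem_image.1 hp.1
    exact ⟨(hw I hI).2.2, hp.2⟩
  have h1 : ∏ I ∈ F, ∑ j ∈ Finset.range k, idealWeight L s I ^ j ≤
      Real.exp (∑ I ∈ F, hh (absNorm I).minFac) := by
    rw [Real.exp_sum]
    refine Finset.prod_le_prod
      (fun I _ => Finset.sum_nonneg fun _ _ => pow_nonneg (idealWeight_nonneg _ _) _)
      fun I hI => (geom_sum_le_exp (idealWeight_nonneg _ _) (hw I hI).1 k).trans ?_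
    exact Real.exp_le_exp.2 (hw I hI).2.1
  have h2 : ∑ I ∈ F, hh (absNorm I).minFac ≤ n * ∑ q ∈ B, hh q := by
    rw [Finset.sum_comp, Finset.mul_sum]
    refine Finset.sum_le_sum fun q _ => ?_
    rw [nsmul_eq_mul]
    refine mul_le_mul_of_nonneg_right ?_ (hh0 q)
    exact_mod_cast card_primes_above_le F hF q
  have h3 : ∑ q ∈ B, hh q ≤ ∑ p ∈ B.filter (fun q => ∃ I : Ideal (𝓞 L), absNorm I = q),
      (p : ℝ) ^ (-s) + 3 * ∑' m : ℕ, ((m : ℝ) ^ 2)⁻¹ := by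
    simp only [hh]
    rw [Finset.sum_add_distrib, Finset.sum_filter, ← Finset.mul_sum]
    gcongr
    exact hsumm.sum_le_tsum _ fun _ _ => by positivity
  have h4 : C⁻¹ * (s - 1)⁻¹ ≤ Real.exp (∑ I ∈ F, hh (absNorm I).minFac) :=
    hle.trans (hFle.trans h1)
  have h5 := Real.log_le_log (by positivity) h4
  rw [Real.log_exp, Real.log_mul (by positivity) (by positivity), Real.log_inv C] at h5
  have h6 : (n : ℝ) * ∑ q ∈ B, hh q ≤ n * (∑ p ∈ B.filter
      (fun q => ∃ I : Ideal (𝓞 L), absNorm I = q), (p : ℝ) ^ (-s) +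
        3 * ∑' m : ℕ, ((m : ℝ) ^ 2)⁻¹) := by gcongr
  linarith

/-- An ideal of `𝓞 L` of prime norm contracts to ideals of the same norm along two distinct
embeddings `K → L`. For `x` with `σ x ≠ τ x` these are different away from the primes dividing
the norm `M` of `σ x - τ x`, because every element of `𝓞 K` is congruent to a rational integer modulo
an ideal of prime norm. -/
lemma exists_two_degree_one (K L : Type*) [Field K] [NumberField K] [Field L] [NumberField L]
    (σ τ : K →+* L) (hne : σ ≠ τ) :
    ∃ M : ℕ, M ≠ 0 ∧ ∀ p : ℕ, p.Prime → ¬ p ∣ M → (∃ J : Ideal (𝓞 L), absNorm J = p) →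
      ∃ I I' : Ideal (𝓞 K), I ≠ I' ∧ absNorm I = p ∧ absNorm I' = p := by
  obtain ⟨x, hx⟩ : ∃ x : 𝓞 K, RingOfIntegers.mapRingHom σ x ≠ RingOfIntegers.mapRingHom τ x := by
    by_contra! hcon
    refine hne (IsFractionRing.injective_comp_algebraMap (A := 𝓞 K) ?_)
    ext x
    have := congrArg (fun y : 𝓞 L => (y : L)) (hcon x)
    simpa using this
  refine ⟨absNorm (Ideal.span {RingOfIntegers.mapRingHom σ x - RingOfIntegers.mapRingHom τ x}),
    ?_, ?_⟩
  · rw [Ne, absNorm_eq_zero_iff, Ideal.span_singleton_eq_bot]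
    exact sub_ne_zero.2 hx
  rintro p hp hpM ⟨J, hJ⟩
  have : Fact p.Prime := ⟨hp⟩
  have hJp : J.IsPrime := isPrime_of_irreducible_absNorm (by rw [hJ]; exact hp)
  have hnorm : ∀ φ : 𝓞 K →+* 𝓞 L, absNorm (J.comap φ) = p := by
    intro φ
    have h1 : Nat.card (𝓞 K ⧸ J.comap φ) ∣ p := by
      have := AddSubgroup.card_dvd_of_injective
        (Ideal.quotientMap J φ le_rfl).toAddMonoidHom Ideal.quotientMap_injective
      rwa [← hJ]
    have h2 : absNorm (J.comap φ) ∣ p := h1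
    rcases (Nat.dvd_prime hp).1 h2 with h | h
    · exact absurd (absNorm_eq_one_iff.1 h) (hJp.comap φ).ne_top
    · exact h
  refine ⟨J.comap (RingOfIntegers.mapRingHom σ), J.comap (RingOfIntegers.mapRingHom τ), ?_,
    hnorm _, hnorm _⟩
  intro heq
  apply hpM
  obtain ⟨m, hm⟩ : ∃ m : ℤ, x - m ∈ J.comap (RingOfIntegers.mapRingHom σ) := by
    set I := J.comap (RingOfIntegers.mapRingHom σ)
    have hc : Nat.card (𝓞 K ⧸ I) = p := hnorm _
    have h1 : (1 : 𝓞 K ⧸ I) ≠ 0 := by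
      have : I.IsPrime := hJp.comap _
      exact one_ne_zero
    obtain ⟨m, hm⟩ := mem_zmultiples_of_prime_card hc h1 (g' := Ideal.Quotient.mk I x)
    refine ⟨m, ?_⟩
    rw [← Ideal.Quotient.eq_zero_iff_mem, map_sub, ← hm]
    simp
  have h1 := hm
  rw [heq] at h1
  rw [Ideal.mem_comap, map_sub, map_intCast] at hm h1
  rw [← hJ]
  refine map_dvd absNorm ?_
  rw [Ideal.dvd_iff_le, Ideal.span_le, Set.singleton_subset_iff]
  have := J.sub_mem hm h1
  simpa using this

/-- The rational primes below a degree-one prime of `K` have upper Dirichlet density less than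
one, when `K` has two distinct embeddings into a number field `L`. The sum of `N(𝔭)^{-s}` over the
degree-one primes of `K` is at most `log (1 / (s - 1)) + O(1)`, and a set of rational primes of
positive density contributes at least twice to it. -/
lemma density_lt_one (K L : Type*) [Field K] [NumberField K] [Field L] [NumberField L]
    (σ τ : K →+* L) (hne : σ ≠ τ) :
    ∃ β C : ℝ, ∃ M : ℕ, 0 < β ∧ M ≠ 0 ∧ ∀ᶠ s : ℝ in 𝓝[>] 1, ∀ B : Finset ℕ,
      (∀ p ∈ B, p.Prime ∧ ¬ p ∣ M ∧ ∃ I : Ideal (𝓞 K), absNorm I = p) →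
      ∑ p ∈ B, (p : ℝ) ^ (-s) ≤ (1 - β) * Real.log (s - 1)⁻¹ + C := by
  classical
  obtain ⟨M, hM, h2⟩ := exists_two_degree_one K L σ τ hne
  obtain ⟨C₁, h3⟩ := sum_prime_ideals_le K
  obtain ⟨C₂, h4⟩ := log_le_sum_degree_one L
  set n := Module.finrank ℤ (𝓞 L) with hn
  have hn0 : (0 : ℝ) < n := by exact_mod_cast Module.finrank_pos
  refine ⟨(n : ℝ)⁻¹, C₁ + (n : ℝ)⁻¹ * C₂ + M.divisors.card, M, inv_pos.2 hn0, hM, ?_⟩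
  filter_upwards [h3, h4, self_mem_nhdsWithin] with s hs3 hs4 hs1 B hB
  replace hs1 : 1 < s := hs1
  obtain ⟨A, hA, hAle⟩ := hs4
  set A' := A.filter fun p => ¬ p ∣ M with hA'
  have hpow0 : ∀ p : ℕ, 0 ≤ (p : ℝ) ^ (-s) := fun p => by positivity
  have hAA' : ∑ p ∈ A, (p : ℝ) ^ (-s) ≤ ∑ p ∈ A', (p : ℝ) ^ (-s) + M.divisors.card := by
    rw [← Finset.sum_filter_not_add_sum_filter A (fun p => p ∣ M)]
    gcongr
    calc ∑ p ∈ A.filter (fun p => p ∣ M), (p : ℝ) ^ (-s)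
        ≤ ∑ p ∈ A.filter (fun p => p ∣ M), 1 := by
          refine Finset.sum_le_sum fun p hp => ?_
          have := (hA p (Finset.mem_filter.1 hp).1).1.one_le
          exact Real.rpow_le_one_of_one_le_of_nonpos (by exact_mod_cast this) (by linarith)
      _ ≤ _ := by
          rw [Finset.sum_const, nsmul_eq_mul, mul_one]
          norm_cast
          refine Finset.card_le_card fun p hp => ?_
          exact Nat.mem_divisors.2 ⟨(Finset.mem_filter.1 hp).2, hM⟩
  -- Primes of `B ∪ A'` lie below at least one ideal of prime norm, those of `A'` below two.
  let D := B ∪ A'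
  let fib : ℕ → Finset (Ideal (𝓞 K)) := fun p =>
    (finite_setOfPred_absNorm_eq (S := 𝓞 K) p).toFinset
  have hfib : ∀ p I, I ∈ fib p ↔ absNorm I = p := fun p I => Set.Finite.mem_toFinset _
  have hA'2 : ∀ p ∈ A', p.Prime ∧ 2 ≤ (fib p).card := by
    intro p hp
    rw [Finset.mem_filter] at hp
    obtain ⟨hpp, hI⟩ := hA p hp.1
    obtain ⟨I, I', hne, hI, hI'⟩ := h2 p hpp hp.2 hI
    exact ⟨hpp, Finset.one_lt_card.2 ⟨I, (hfib _ _).2 hI, I', (hfib _ _).2 hI', hne⟩⟩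
  have hD : ∀ p ∈ D, p.Prime ∧ 1 ≤ (fib p).card := by
    intro p hp
    rcases Finset.mem_union.1 hp with hp | hp
    · obtain ⟨hpp, -, I, hI⟩ := hB p hp
      exact ⟨hpp, Finset.card_pos.2 ⟨I, (hfib _ _).2 hI⟩⟩
    · exact ⟨(hA'2 p hp).1, by linarith [(hA'2 p hp).2]⟩
  have key := hs3 (D.biUnion fib) (by
    intro I hI
    obtain ⟨p, hp, hIp⟩ := Finset.mem_biUnion.1 hI
    rw [hfib] at hIp
    have hpp := (hD p hp).1
    refine ⟨isPrime_of_irreducible_absNorm (by rw [hIp]; exact hpp), ?_⟩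
    rintro rfl
    rw [absNorm_bot] at hIp
    exact hpp.ne_zero hIp.symm)
  rw [Finset.sum_biUnion (by
    intro p _ q _ hpq
    rw [Function.onFun, Finset.disjoint_left]
    intro I hI hJ
    rw [hfib] at hI hJ
    exact hpq (hI.symm.trans hJ))] at key
  have h5 : ∑ p ∈ B, (p : ℝ) ^ (-s) + ∑ p ∈ A', (p : ℝ) ^ (-s) ≤
      ∑ p ∈ D, ∑ I ∈ fib p, idealWeight K s I := by
    have h6 : ∑ p ∈ B, (p : ℝ) ^ (-s) ≤ ∑ p ∈ D, (p : ℝ) ^ (-s) :=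
      Finset.sum_le_sum_of_subset_of_nonneg Finset.subset_union_left fun p _ _ => hpow0 p
    have h7 : ∑ p ∈ A', (p : ℝ) ^ (-s) = ∑ p ∈ D, if p ∈ A' then (p : ℝ) ^ (-s) else 0 := by
      rw [← Finset.sum_filter]
      congr 1
      ext p
      simp [D]
    rw [h7]
    refine (add_le_add_left h6 _).trans ?_
    rw [← Finset.sum_add_distrib]
    refine Finset.sum_le_sum fun p hp => ?_
    have h8 : ∑ I ∈ fib p, idealWeight K s I = (fib p).card * (p : ℝ) ^ (-s) := by
      rw [Finset.sum_congr rfl fun I hI => by rw [idealWeight_apply, (hfib p I).1 hI],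
        Finset.sum_const, nsmul_eq_mul]
    rw [h8]
    split_ifs with h
    · have : (2 : ℝ) ≤ (fib p).card := by exact_mod_cast (hA'2 p h).2
      nlinarith [hpow0 p]
    · have : (1 : ℝ) ≤ (fib p).card := by exact_mod_cast (hD p hp).2
      nlinarith [hpow0 p]
  have h9 : (n : ℝ)⁻¹ * Real.log (s - 1)⁻¹ ≤
      ∑ p ∈ A, (p : ℝ) ^ (-s) + (n : ℝ)⁻¹ * C₂ := by
    calc (n : ℝ)⁻¹ * Real.log (s - 1)⁻¹
        ≤ (n : ℝ)⁻¹ * (n * ∑ p ∈ A, (p : ℝ) ^ (-s) + C₂) := by gcongr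
      _ = _ := by field_simp
  linarith

/-! ### Primes modulo which a polynomial has a root -/

/-- Kummer-Dedekind: away from the conductor, a root modulo `p` of the minimal polynomial of `θ`
gives a prime of degree one above `p`. -/
lemma exists_ideal_of_root {K : Type*} [Field K] [NumberField K] (θ : 𝓞 K) {p : ℕ}
    [Fact p.Prime] (hp : ¬ p ∣ RingOfIntegers.exponent θ) (x : ZMod p)
    (h : eval₂ (Int.castRingHom (ZMod p)) x (minpoly ℤ θ) = 0) :
    ∃ I : Ideal (𝓞 K), absNorm I = p := by
  obtain ⟨m, rfl⟩ := ZMod.intCast_surjective x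
  have hmap : (X - C m : ℤ[X]).map (Int.castRingHom (ZMod p)) = X - C (m : ZMod p) := by simp
  have hQ : (X - C m : ℤ[X]).map (Int.castRingHom (ZMod p)) ∈
      RingOfIntegers.monicFactorsMod θ p := by
    rw [Multiset.mem_toFinset, Polynomial.mem_normalizedFactors_iff
      (map_monic_ne_zero (minpoly.monic θ.isIntegral)), hmap]
    refine ⟨irreducible_X_sub_C _, monic_X_sub_C _, ?_⟩
    rw [dvd_iff_isRoot, IsRoot.def, eval_map]
    exact h
  have e := RingOfIntegers.ZModXQuotSpanEquivQuotSpanPair hp hQ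
  refine ⟨Ideal.span {(p : 𝓞 K), aeval θ (X - C m : ℤ[X])}, ?_⟩
  rw [absNorm_apply, Submodule.cardQuot_apply]
  refine (Nat.card_congr e.toEquiv).symm.trans ?_
  rw [hmap, Nat.card_congr (quotientSpanXSubCAlgEquiv (m : ZMod p)).toEquiv, Nat.card_zmod]

/-- A generator `θ` of `K` has a nonzero conductor exponent: a common denominator of finitely many
expressions of generators of `𝓞 K` as rational polynomials in `θ` lies in the conductor. -/
lemma exponent_ne_zero {K : Type*} [Field K] [NumberField K] (θ : 𝓞 K)
    (hθ : Algebra.adjoin ℚ {(θ : K)} = ⊤) : RingOfIntegers.exponent θ ≠ 0 := by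
  classical
  have h1 : ∀ b : 𝓞 K, ∃ d : ℕ, 0 < d ∧ (d : 𝓞 K) * b ∈ Algebra.adjoin ℤ {θ} := by
    intro b
    have hb : (b : K) ∈ Algebra.adjoin ℚ {(θ : K)} := by rw [hθ]; trivial
    rw [Algebra.adjoin_singleton_eq_range_aeval] at hb
    obtain ⟨g, hg⟩ := hb
    obtain ⟨d, hd, hspec⟩ := IsLocalization.integerNormalization_spec (nonZeroDivisors ℤ) g
    have hd0 : d ≠ 0 := nonZeroDivisors.ne_zero hd
    have h2 : (d : 𝓞 K) * b ∈ Algebra.adjoin ℤ {θ} := by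
      have h3 : (d : 𝓞 K) * b =
          aeval θ (IsLocalization.integerNormalization (nonZeroDivisors ℤ) g) := by
        apply RingOfIntegers.coe_injective
        have h4 : aeval (θ : K) ((IsLocalization.integerNormalization
            (nonZeroDivisors ℤ) g).map (algebraMap ℤ ℚ)) = (d : K) * b := by
          rw [hspec, map_zsmul, ← zsmul_eq_mul]
          exact congrArg (fun y => d • y) hg
        rw [aeval_map_algebraMap] at h4
        rw [map_mul, map_intCast]
        rw [← h4]
        exact aeval_algebraMap_apply K θ _
      rw [h3]
      exact aeval_mem_adjoin_singleton ℤ θ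
    refine ⟨d.natAbs, Int.natAbs_pos.2 hd0, ?_⟩
    rcases Int.natAbs_eq d with h | h
    · have : (d : 𝓞 K) = (d.natAbs : 𝓞 K) := by
        rw [← Int.cast_natCast]
        exact congrArg _ h
      rwa [← this]
    · have : (d.natAbs : 𝓞 K) * b = -((d : 𝓞 K) * b) := by
        rw [← Int.cast_natCast, ← neg_mul, ← Int.cast_neg]
        exact congrArg (fun z : ℤ => (z : 𝓞 K) * b) (by omega)
      rw [this]
      exact neg_mem h2
  choose d hd0 hd using h1
  obtain ⟨s, hs⟩ := (Module.Finite.fg_top : (⊤ : Submodule ℤ (𝓞 K)).FG)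
  have h5 : (∏ b ∈ s, d b : ℕ) ∈ {d : ℕ | 0 < d ∧ (d : 𝓞 K) ∈ conductor ℤ θ} := by
    refine ⟨Finset.prod_pos fun b _ => hd0 b, ?_⟩
    rw [mem_conductor_iff]
    intro b
    have hb : b ∈ Submodule.span ℤ (s : Set (𝓞 K)) := by rw [hs]; trivial
    induction hb using Submodule.span_induction with
    | mem x hx =>
      rw [← Finset.prod_erase_mul _ _ (Finset.mem_coe.1 hx), Nat.cast_mul, mul_assoc]
      exact mul_mem (natCast_mem _ _) (hd x)
    | zero => rw [mul_zero]; exact zero_mem _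
    | add x y _ _ hx hy => rw [mul_add]; exact add_mem hx hy
    | smul a x _ hx => rw [mul_smul_comm]; exact Subalgebra.smul_mem _ hx a
  rw [RingOfIntegers.exponent_eq_sInf]
  exact (Nat.sInf_mem ⟨_, h5⟩).1.ne.symm

/-- The primes modulo which `P` has a root, where `P` is (up to scaling) the minimal polynomial of a
generator `α` of a number field `K` with two distinct embeddings into `L`, have upper Dirichlet
density less than one. -/
lemma density_roots_aux {K L : Type*} [Field K] [NumberField K] [Field L] [NumberField L]
    (σ τ : K →+* L) (hστ : σ ≠ τ) (P : ℤ[X]) (hdeg : 2 ≤ P.natDegree) (α : K)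
    (hroot : eval₂ (algebraMap ℤ K) α P = 0) (hα : Algebra.adjoin ℚ {α} = ⊤)
    (hfin : Module.finrank ℚ K = P.natDegree) :
    ∃ β C : ℝ, 0 < β ∧ ∀ᶠ s : ℝ in 𝓝[>] 1, ∀ B : Finset ℕ,
      (∀ p ∈ B, p.Prime ∧ ((p : ℤ) ∣ P.leadingCoeff ∨
        ∃ x : ZMod p, eval₂ (Int.castRingHom (ZMod p)) x P = 0)) →
      ∑ p ∈ B, (p : ℝ) ^ (-s) ≤ (1 - β) * Real.log (s - 1)⁻¹ + C := by
  classical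
  have hP0 : P ≠ 0 := by rintro rfl; simp at hdeg
  have hinj : Function.Injective (algebraMap ℤ ℚ) := Int.cast_injective
  obtain ⟨β, C₀, M, hβ, hM, hmain⟩ := density_lt_one K L σ τ hστ
  set a := P.leadingCoeff with ha
  have ha0 : a ≠ 0 := leadingCoeff_ne_zero.2 hP0
  -- `Q` is the monic polynomial with root `θ = a α`, an algebraic integer.
  set Q := P.integralNormalization with hQ
  have hQm : Q.Monic := monic_integralNormalization hP0
  have hQroot : eval₂ (algebraMap ℤ K) ((a : K) * α) Q = 0 := by
    have := integralNormalization_eval₂_leadingCoeff_mul (p := P) (by omega) (algebraMap ℤ K)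
      (α)
    rw [hroot, mul_zero] at this
    simpa using this
  let θ : 𝓞 K := ⟨(a : K) * α, ⟨Q, hQm, hQroot⟩⟩
  have hθ : (θ : K) = (a : K) * α := rfl
  have hθtop : Algebra.adjoin ℚ {(θ : K)} = ⊤ := by
    rw [← hα]
    apply le_antisymm
    · rw [Algebra.adjoin_le_iff, Set.singleton_subset_iff, hθ]
      exact mul_mem (intCast_mem _ _) (Algebra.self_mem_adjoin_singleton _ _)
    · rw [Algebra.adjoin_le_iff, Set.singleton_subset_iff]
      have h1 : α = ((a : ℚ)⁻¹) • (θ : K) := by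
        have ha' : (a : ℚ) ≠ 0 := by exact_mod_cast ha0
        rw [hθ, eq_inv_smul_iff₀ ha', Algebra.smul_def]
        simp
      rw [h1]
      exact Subalgebra.smul_mem _ (Algebra.self_mem_adjoin_singleton _ _) _
  have hexp := exponent_ne_zero θ hθtop
  have hmin : minpoly ℤ θ = Q := by
    have haev : aeval θ Q = 0 := by
      apply RingOfIntegers.coe_injective
      rw [map_zero]
      have h1 : aeval (algebraMap (𝓞 K) K θ) Q = algebraMap (𝓞 K) K (aeval θ Q) :=
        aeval_algebraMap_apply K θ Q
      exact h1.symm.trans hQroot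
    have hdvd := minpoly.isIntegrallyClosed_dvd θ.isIntegral haev
    refine (eq_of_monic_of_dvd_of_natDegree_le (minpoly.monic θ.isIntegral) hQm hdvd ?_).symm
    rw [natDegree_integralNormalization]
    have h2 : minpoly ℚ (θ : K) = (minpoly ℤ (θ : K)).map (algebraMap ℤ ℚ) :=
      minpoly.isIntegrallyClosed_eq_field_fractions' ℚ θ.isIntegral_coe
    have h3 : minpoly ℤ (θ : K) = minpoly ℤ θ :=
      minpoly.algebraMap_eq RingOfIntegers.coe_injective θ
    have h4 : (minpoly ℚ (θ : K)).natDegree = (minpoly ℤ θ).natDegree := by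
      rw [h2, h3]; exact natDegree_map_eq_of_injective hinj _
    rw [← h4]
    have hint : IsIntegral ℚ (θ : K) := IsIntegral.of_finite ℚ _
    have h5 : IntermediateField.adjoin ℚ {(θ : K)} = ⊤ := by
      rw [← top_le_iff]
      intro x _
      have : x ∈ Algebra.adjoin ℚ {(θ : K)} := by rw [hθtop]; trivial
      exact IntermediateField.algebra_adjoin_le_adjoin ℚ _ this
    have h6 := IntermediateField.adjoin.finrank hint
    rw [h5, IntermediateField.finrank_top'] at h6
    rw [← h6, hfin]
  set M' := M * (RingOfIntegers.exponent θ * a.natAbs) with hM'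
  have hMzero : M' ≠ 0 := mul_ne_zero hM (mul_ne_zero hexp (Int.natAbs_ne_zero.2 ha0))
  refine ⟨β, C₀ + M'.divisors.card, hβ, ?_⟩
  filter_upwards [hmain, self_mem_nhdsWithin] with s hs hs1 B hB
  replace hs1 : 1 < s := hs1
  rw [← Finset.sum_filter_not_add_sum_filter B (fun p => p ∣ M'), ← add_assoc]
  refine add_le_add (hs _ ?_) ?_
  · intro p hp
    rw [Finset.mem_filter] at hp
    obtain ⟨hpB, hpM⟩ := hp
    obtain ⟨hpp, hor⟩ := hB p hpB
    have : Fact p.Prime := ⟨hpp⟩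
    refine ⟨hpp, fun h => hpM (h.mul_right _), ?_⟩
    have hpe : ¬ p ∣ RingOfIntegers.exponent θ := fun h =>
      hpM ((h.mul_right _).mul_left _)
    have hpa : ¬ (p : ℤ) ∣ a := fun h =>
      hpM (((Int.natCast_dvd.1 h).mul_left _).mul_left _)
    obtain ⟨x, hx⟩ := hor.resolve_left hpa
    refine exists_ideal_of_root θ hpe (Int.castRingHom (ZMod p) a * x) ?_
    rw [hmin, integralNormalization_eval₂_leadingCoeff_mul (by omega), hx, mul_zero]
  · calc ∑ p ∈ B.filter (fun p => p ∣ M'), (p : ℝ) ^ (-s)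
        ≤ ∑ p ∈ B.filter (fun p => p ∣ M'), 1 := by
          refine Finset.sum_le_sum fun p hp => ?_
          have := (hB p (Finset.mem_filter.1 hp).1).1.one_le
          exact Real.rpow_le_one_of_one_le_of_nonpos (by exact_mod_cast this) (by linarith)
      _ ≤ _ := by
          rw [Finset.sum_const, nsmul_eq_mul, mul_one]
          norm_cast
          refine Finset.card_le_card fun p hp => ?_
          exact Nat.mem_divisors.2 ⟨(Finset.mem_filter.1 hp).2, hMzero⟩

/-- For `P` irreducible over `ℚ` of degree at least two, the primes modulo which `P` has a root
have upper Dirichlet density less than one. -/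
lemma density_roots_lt_one (P : ℤ[X]) (hirr : Irreducible (P.map (Int.castRingHom ℚ)))
    (hdeg : 2 ≤ P.natDegree) :
    ∃ β C : ℝ, 0 < β ∧ ∀ᶠ s : ℝ in 𝓝[>] 1, ∀ B : Finset ℕ,
      (∀ p ∈ B, p.Prime ∧ ((p : ℤ) ∣ P.leadingCoeff ∨
        ∃ x : ZMod p, eval₂ (Int.castRingHom (ZMod p)) x P = 0)) →
      ∑ p ∈ B, (p : ℝ) ^ (-s) ≤ (1 - β) * Real.log (s - 1)⁻¹ + C := by
  classical
  obtain ⟨f, hf⟩ : ∃ f, f = P.map (Int.castRingHom ℚ) := ⟨_, rfl⟩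
  rw [← hf] at hirr
  have hfact : Fact (Irreducible f) := ⟨hirr⟩
  have hfdeg : f.natDegree = P.natDegree := by
    rw [hf]; exact natDegree_map_eq_of_injective Int.cast_injective P
  have hLnf : NumberField f.SplittingField :=
    { to_charZero := charZero_of_injective_algebraMap (algebraMap ℚ f.SplittingField).injective
      to_finiteDimensional := inferInstance }
  -- Two distinct roots of `f` in the splitting field give two embeddings of `ℚ[X]/(f)`.
  obtain ⟨σ, τ, hστ⟩ : ∃ σ τ : AdjoinRoot f →+* f.SplittingField, σ ≠ τ := by
    have hcard := card_rootSet_eq_natDegree (K := f.SplittingField) hirr.separable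
      (SplittingField.splits f)
    obtain ⟨x, y, hxy⟩ := Fintype.one_lt_card_iff.1 (hcard.symm ▸ (by omega : 1 < f.natDegree))
    have hr : ∀ z : f.rootSet f.SplittingField,
        eval₂ (algebraMap ℚ f.SplittingField) z.1 f = 0 := fun z =>
      aeval_eq_zero_of_mem_rootSet z.2
    refine ⟨AdjoinRoot.lift _ _ (hr x), AdjoinRoot.lift _ _ (hr y), fun h => hxy ?_⟩
    have h2 := congrArg (fun φ : AdjoinRoot f →+* f.SplittingField => φ (AdjoinRoot.root f)) h
    exact Subtype.ext
      ((AdjoinRoot.lift_root (hr x)).symm.trans (h2.trans (AdjoinRoot.lift_root (hr y))))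
  have hroot : eval₂ (algebraMap ℤ (AdjoinRoot f)) (AdjoinRoot.root f) P = 0 := by
    have h1 := AdjoinRoot.eval₂_root f
    have h2 : eval₂ (AdjoinRoot.of f) (AdjoinRoot.root f) (P.map (Int.castRingHom ℚ)) = 0 := by
      rw [← hf]; exact h1
    rw [eval₂_map] at h2
    rw [← h2]
    congr 1
  refine density_roots_aux σ τ hστ P hdeg (AdjoinRoot.root f) hroot ?_ ?_
  · exact AdjoinRoot.adjoinRoot_eq_top
  · rw [(AdjoinRoot.powerBasis hirr.ne_zero).finrank, AdjoinRoot.powerBasis_dim, hfdeg]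

/-! ### Squarefree integers with restricted prime factors -/

/-- Squarefree positive integers up to `x` all of whose prime factors satisfy `G`. -/
noncomputable def sqfWith (G : ℕ → Prop) (x : ℕ) : Finset ℕ := by
  classical
  exact (Finset.Icc 1 x).filter fun n => Squarefree n ∧ ∀ p, p.Prime → p ∣ n → G p

lemma mem_sqfWith {G : ℕ → Prop} {x n : ℕ} : n ∈ sqfWith G x ↔
    (1 ≤ n ∧ n ≤ x) ∧ Squarefree n ∧ ∀ p, p.Prime → p ∣ n → G p := by
  classical
  simp [sqfWith]

/-- The Euler product bound for squarefree integers with prime factors in `G`. -/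
lemma sum_sqfWith_rpow_le (G : ℕ → Prop) (x : ℕ) (s : ℝ) : ∃ B : Finset ℕ,
    (∀ p ∈ B, p.Prime ∧ G p) ∧
    ∑ n ∈ sqfWith G x, (n : ℝ) ^ (-s) ≤ Real.exp (∑ p ∈ B, (p : ℝ) ^ (-s)) := by
  classical
  set B := (Finset.Icc 1 x).filter fun p => p.Prime ∧ G p with hB
  refine ⟨B, fun p hp => (Finset.mem_filter.1 hp).2, ?_⟩
  have hinj : Set.InjOn Nat.primeFactors (sqfWith G x : Set ℕ) := by
    intro m hm n hn hmn
    rw [← Nat.prod_primeFactors_of_squarefree (mem_sqfWith.1 hm).2.1,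
      ← Nat.prod_primeFactors_of_squarefree (mem_sqfWith.1 hn).2.1, hmn]
  have hterm : ∀ n ∈ sqfWith G x, (n : ℝ) ^ (-s) = ∏ p ∈ n.primeFactors, (p : ℝ) ^ (-s) := by
    intro n hn
    rw [Real.finsetProd_rpow _ _ fun p _ => p.cast_nonneg, ← Nat.cast_prod,
      Nat.prod_primeFactors_of_squarefree (mem_sqfWith.1 hn).2.1]
  have hnonneg : ∀ p : ℕ, 0 ≤ (p : ℝ) ^ (-s) := fun p => Real.rpow_nonneg p.cast_nonneg _
  calc ∑ n ∈ sqfWith G x, (n : ℝ) ^ (-s)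
      = ∑ t ∈ (sqfWith G x).image Nat.primeFactors, ∏ p ∈ t, (p : ℝ) ^ (-s) := by
        rw [Finset.sum_image hinj]
        exact Finset.sum_congr rfl hterm
    _ ≤ ∑ t ∈ B.powerset, ∏ p ∈ t, (p : ℝ) ^ (-s) := by
        refine Finset.sum_le_sum_of_subset_of_nonneg ?_
          fun t _ _ => Finset.prod_nonneg fun p _ => hnonneg p
        intro t ht
        obtain ⟨n, hn, rfl⟩ := Finset.mem_image.1 ht
        rw [Finset.mem_powerset]
        intro p hp
        obtain ⟨⟨h1, h2⟩, -, h3⟩ := mem_sqfWith.1 hn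
        have hpp := Nat.prime_of_mem_primeFactors hp
        have hpd := Nat.dvd_of_mem_primeFactors hp
        exact Finset.mem_filter.2 ⟨Finset.mem_Icc.2 ⟨hpp.one_le,
          (Nat.le_of_dvd h1 hpd).trans h2⟩, hpp, h3 p hpp hpd⟩
    _ = ∏ p ∈ B, (1 + (p : ℝ) ^ (-s)) := (Finset.prod_one_add B).symm
    _ ≤ ∏ p ∈ B, Real.exp ((p : ℝ) ^ (-s)) :=
        Finset.prod_le_prod (fun p _ => add_nonneg zero_le_one (hnonneg p))
          fun p _ => by rw [add_comm]; exact Real.add_one_le_exp _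
    _ = _ := (Real.exp_sum _ _).symm

/-- Writing `log x = log n + log (x / n)` and `log n = ∑_{p ∣ n} log p`, Chebyshev's bound
reduces the count of `sqfWith G x` to the sum of the reciprocals of its members. -/
lemma card_sqfWith_mul_log_le (G : ℕ → Prop) (x : ℕ) :
    ((sqfWith G x).card : ℝ) * Real.log x ≤
      (Real.log 4 + 1) * x * ∑ n ∈ sqfWith G x, (n : ℝ)⁻¹ := by
  classical
  have hpos : ∀ n ∈ sqfWith G x, (0 : ℝ) < n := fun n hn => by
    exact_mod_cast (mem_sqfWith.1 hn).1.1
  have hlog : ∑ n ∈ sqfWith G x, Real.log n ≤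
      Real.log 4 * x * ∑ n ∈ sqfWith G x, (n : ℝ)⁻¹ := by
    have h1 : ∀ n ∈ sqfWith G x, Real.log n = ∑ p ∈ n.primeFactors, Real.log p := by
      intro n hn
      conv_lhs => rw [← Nat.prod_primeFactors_of_squarefree (mem_sqfWith.1 hn).2.1]
      rw [Nat.cast_prod, Real.log_prod fun p hp => by
        exact_mod_cast (Nat.prime_of_mem_primeFactors hp).ne_zero]
    rw [Finset.sum_congr rfl h1, Finset.sum_sigma']
    have h2 : ∀ m ∈ sqfWith G x, ∑ p ∈ Nat.primesLE (x / m), Real.log p ≤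
        Real.log 4 * x * (m : ℝ)⁻¹ := by
      intro m hm
      rw [← Chebyshev.theta_eq_sum_primesLE_log]
      refine (Chebyshev.theta_le_log4_mul_x (Nat.cast_nonneg _)).trans ?_
      rw [mul_assoc, ← div_eq_mul_inv]
      exact mul_le_mul_of_nonneg_left Nat.cast_div_le (Real.log_nonneg (by norm_num))
    rw [Finset.mul_sum]
    refine le_trans ?_ (Finset.sum_le_sum h2)
    rw [Finset.sum_sigma']
    -- The pair `(n, p)` with `p ∣ n` is sent to `(n / p, p)`.
    have hinj : Set.InjOn (fun a : (_ : ℕ) × ℕ => (⟨a.1 / a.2, a.2⟩ : (_ : ℕ) × ℕ))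
        ((sqfWith G x).sigma fun n => n.primeFactors : Set ((_ : ℕ) × ℕ)) := by
      rintro ⟨n, p⟩ h ⟨m, q⟩ h' heq
      simp only [Finset.mem_coe, Finset.mem_sigma] at h h'
      simp only [Sigma.mk.injEq, heq_eq_eq] at heq
      obtain ⟨h3, rfl⟩ := heq
      have h4 := Nat.div_mul_cancel (Nat.dvd_of_mem_primeFactors h.2)
      have h5 := Nat.div_mul_cancel (Nat.dvd_of_mem_primeFactors h'.2)
      rw [← h4, ← h5, h3]
    have himg := Finset.sum_image (f := fun a : (_ : ℕ) × ℕ => Real.log a.2)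
      (s := (sqfWith G x).sigma fun n => n.primeFactors) hinj
    dsimp only at himg
    rw [← himg]
    refine Finset.sum_le_sum_of_subset_of_nonneg ?_ fun a _ _ => Real.log_natCast_nonneg _
    intro a ha
    obtain ⟨⟨n, p⟩, hb, rfl⟩ := Finset.mem_image.1 ha
    rw [Finset.mem_sigma] at hb ⊢
    obtain ⟨⟨hn1, hnx⟩, hsq, hG⟩ := mem_sqfWith.1 hb.1
    have hpp := Nat.prime_of_mem_primeFactors hb.2
    obtain ⟨m, hm⟩ := Nat.dvd_of_mem_primeFactors hb.2
    dsimp only at *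
    subst hm
    rw [Nat.mul_div_cancel_left _ hpp.pos]
    have hm0 : 0 < m := Nat.pos_of_mul_pos_left hn1
    refine ⟨mem_sqfWith.2 ⟨⟨hm0, (Nat.le_mul_of_pos_left m hpp.pos).trans hnx⟩,
      hsq.squarefree_of_dvd (dvd_mul_left _ _),
      fun q hq hqm => hG q hq (hqm.mul_left _)⟩, ?_⟩
    rw [Nat.mem_primesLE]
    exact ⟨(Nat.le_div_iff_mul_le hm0).2 hnx, hpp⟩
  have h3 : ∀ n ∈ sqfWith G x, Real.log x ≤ Real.log n + x * (n : ℝ)⁻¹ := by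
    intro n hn
    obtain ⟨h4, h5⟩ := (mem_sqfWith.1 hn).1
    have hn0 := hpos n hn
    have hx0 : (0 : ℝ) < x := hn0.trans_le (by exact_mod_cast h5)
    have h6 := Real.log_le_self (div_pos hx0 hn0).le
    rw [Real.log_div hx0.ne' hn0.ne', div_eq_mul_inv] at h6
    linarith
  calc ((sqfWith G x).card : ℝ) * Real.log x = ∑ n ∈ sqfWith G x, Real.log x := by
        rw [Finset.sum_const, nsmul_eq_mul]
    _ ≤ ∑ n ∈ sqfWith G x, (Real.log n + x * (n : ℝ)⁻¹) := Finset.sum_le_sum h3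
    _ = ∑ n ∈ sqfWith G x, Real.log n + x * ∑ n ∈ sqfWith G x, (n : ℝ)⁻¹ := by
        rw [Finset.sum_add_distrib, Finset.mul_sum]
    _ ≤ _ := by linarith

/-- If the primes in `G` have upper Dirichlet density at most `1 - β`, the choice
`s = 1 + 1 / log x` bounds the sum of reciprocals over `sqfWith G x` by `O((log x) ^ (1 - β))`. -/
lemma card_sqfWith_le (G : ℕ → Prop) (β C : ℝ)
    (hG : ∀ᶠ s : ℝ in 𝓝[>] 1, ∀ B : Finset ℕ, (∀ p ∈ B, p.Prime ∧ G p) →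
      ∑ p ∈ B, (p : ℝ) ^ (-s) ≤ (1 - β) * Real.log (s - 1)⁻¹ + C) :
    ∃ C' : ℝ, ∀ᶠ x : ℕ in atTop,
      ((sqfWith G x).card : ℝ) ≤ C' * (x * Real.log x ^ (-β)) := by
  have hlog : Tendsto (fun x : ℕ => Real.log x) atTop atTop :=
    Real.tendsto_log_atTop.comp tendsto_natCast_atTop_atTop
  have htend : Tendsto (fun x : ℕ => 1 + (Real.log x)⁻¹) atTop (𝓝[>] 1) := by
    rw [tendsto_nhdsWithin_iff]
    constructor
    · simpa using (tendsto_inv_atTop_zero.comp hlog).const_add 1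
    · filter_upwards [hlog.eventually_gt_atTop 0] with x hx
      simpa using hx
  refine ⟨(Real.log 4 + 1) * (Real.exp 1 * Real.exp C), ?_⟩
  filter_upwards [htend.eventually hG, hlog.eventually_gt_atTop 0] with x hx hl
  obtain ⟨B, hB, hle⟩ := sum_sqfWith_rpow_le G x (1 + (Real.log x)⁻¹)
  have h1 := hx B hB
  rw [add_sub_cancel_left, inv_inv] at h1
  have hinv : ∀ n ∈ sqfWith G x,
      (n : ℝ)⁻¹ ≤ Real.exp 1 * (n : ℝ) ^ (-(1 + (Real.log x)⁻¹)) := by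
    intro n hn
    obtain ⟨h4, h5⟩ := (mem_sqfWith.1 hn).1
    have hn0 : (0 : ℝ) < n := by exact_mod_cast h4
    have hnx : Real.log n ≤ Real.log x := Real.log_le_log hn0 (by exact_mod_cast h5)
    rw [← Real.rpow_neg_one, Real.rpow_def_of_pos hn0, Real.rpow_def_of_pos hn0, ← Real.exp_add]
    apply Real.exp_le_exp.2
    have : Real.log n * (Real.log x)⁻¹ ≤ 1 := by
      rw [← div_eq_mul_inv]; exact (div_le_one hl).2 hnx
    linarith
  have hsum : ∑ n ∈ sqfWith G x, (n : ℝ)⁻¹ ≤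
      Real.exp 1 * Real.exp C * (Real.log x ^ (-β) * Real.log x) := by
    calc _ ≤ ∑ n ∈ sqfWith G x, Real.exp 1 * (n : ℝ) ^ (-(1 + (Real.log x)⁻¹)) :=
          Finset.sum_le_sum hinv
      _ = Real.exp 1 * ∑ n ∈ sqfWith G x, (n : ℝ) ^ (-(1 + (Real.log x)⁻¹)) :=
          (Finset.mul_sum _ _ _).symm
      _ ≤ Real.exp 1 * Real.exp ((1 - β) * Real.log (Real.log x) + C) := by
          gcongr
          exact hle.trans (Real.exp_le_exp.2 h1)
      _ = _ := by
          rw [← Real.rpow_add_one hl.ne', Real.rpow_def_of_pos hl]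
          simp only [← Real.exp_add]
          congr 1
          ring
  have h2 := card_sqfWith_mul_log_le G x
  have hc : (0 : ℝ) ≤ (Real.log 4 + 1) * x := by
    have : 0 ≤ Real.log 4 := Real.log_nonneg (by norm_num)
    positivity
  have h3 := h2.trans (mul_le_mul_of_nonneg_left hsum hc)
  refine le_of_mul_le_mul_right (h3.trans (le_of_eq ?_)) hl
  ring

/-! ### Prime divisors of specializations -/

/-- The `p`-adic valuation of `d * F` is even and that of `d` is one. -/
lemma prime_dvd_of_mul_eq_sq {d F : ℤ} {s : ℚ} (hs : s ≠ 0) (h : (d : ℚ) * F = s ^ 2) {p : ℕ}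
    (hp : p.Prime) (hpd : (p : ℤ) ∣ d) (hpd2 : ¬ (p : ℤ) ^ 2 ∣ d) : (p : ℤ) ∣ F := by
  have : Fact p.Prime := ⟨hp⟩
  have h0 : (d : ℚ) * F ≠ 0 := by rw [h]; exact pow_ne_zero _ hs
  have hd0 : (d : ℚ) ≠ 0 := left_ne_zero_of_mul h0
  have hF0 : (F : ℚ) ≠ 0 := right_ne_zero_of_mul h0
  have hd0' : d ≠ 0 := by exact_mod_cast hd0
  have hv := congrArg (padicValRat p) h
  rw [padicValRat.mul hd0 hF0, padicValRat.pow, padicValRat.of_int, padicValRat.of_int] at hv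
  have h1 : 1 ≤ padicValInt p d := by
    have := (padicValInt_dvd_iff (p := p) 1 d).1 (by simpa using hpd)
    exact this.resolve_left hd0'
  have h2 : ¬ 2 ≤ padicValInt p d := fun h2 => hpd2 ((padicValInt_dvd_iff 2 d).2 (Or.inr h2))
  by_contra hpF
  have h3 : padicValInt p F = 0 := padicValInt.eq_zero_of_not_dvd hpF
  push_cast at hv
  omega

/-- Clearing denominators in `d P(u/v) = s²` (the degree of `P` is even) shows that a prime exactly
dividing `d` divides `v ^ r P(u/v)`, so `P` has a root modulo `p`, possibly at infinity. -/
lemma root_mod_of_specialization {P : ℤ[X]} {r : ℕ} (hre : Even r) (hPr : P.natDegree = r)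
    {d : ℤ} (h : (∃ t₀ : ℚ, aeval t₀ P ≠ 0 ∧ ∃ s : ℚ, s ≠ 0 ∧ (d : ℚ) * aeval t₀ P = s ^ 2) ∨
      (P.natDegree = r ∧ ∃ s : ℚ, s ≠ 0 ∧ (d : ℚ) * (P.leadingCoeff : ℚ) = s ^ 2))
    {p : ℕ} (hp : p.Prime) (hpd : (p : ℤ) ∣ d) (hpd2 : ¬ (p : ℤ) ^ 2 ∣ d) :
    (p : ℤ) ∣ P.leadingCoeff ∨ ∃ x : ZMod p, eval₂ (Int.castRingHom (ZMod p)) x P = 0 := by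
  have : Fact p.Prime := ⟨hp⟩
  rcases h with ⟨t, -, s, hs, hds⟩ | ⟨-, s, hs, hds⟩
  swap
  · exact Or.inl (prime_dvd_of_mul_eq_sq hs hds hp hpd hpd2)
  by_cases hlc : (p : ℤ) ∣ P.leadingCoeff
  · exact Or.inl hlc
  right
  set v : ℤ := (t.den : ℤ) with hv
  have hv0 : (v : ℚ) ≠ 0 := by
    rw [hv]
    exact_mod_cast t.den_nz
  set F : ℤ := (scaleRoots P v).eval t.num with hF
  have hFt : (F : ℚ) = (v : ℚ) ^ r * aeval t P := by
    have h1 := scaleRoots_eval₂_mul (p := P) (Int.castRingHom ℚ) t v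
    have h2 : (Int.castRingHom ℚ) v * t = (Int.castRingHom ℚ) t.num := by
      simp [hv, mul_comm]
    rw [h2, eval₂_hom, hPr] at h1
    exact h1
  obtain ⟨k, hk⟩ := hre
  have hpF : (p : ℤ) ∣ F := by
    refine prime_dvd_of_mul_eq_sq (d := d) (s := (v : ℚ) ^ k * s)
      (mul_ne_zero (pow_ne_zero _ hv0) hs) ?_ hp hpd hpd2
    rw [hFt, mul_pow, ← hds, hk]
    ring
  set f := Int.castRingHom (ZMod p) with hf
  have hf0 : ∀ z : ℤ, f z = 0 ↔ (p : ℤ) ∣ z := fun z => ZMod.intCast_zmod_eq_zero_iff_dvd z p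
  have h3 : eval₂ f (f t.num) (scaleRoots P v) = 0 := by
    rw [eval₂_hom, hf0]; exact hpF
  by_cases hpv : f v = 0
  · exfalso
    have h4 : (scaleRoots P v).map f = scaleRoots (P.map f) (f v) :=
      map_scaleRoots _ _ _ (by rwa [Ne, hf0])
    rw [← eval_map, h4, hpv, scaleRoots_zero, leadingCoeff_map_of_leadingCoeff_ne_zero f
      (by rwa [Ne, hf0])] at h3
    simp only [eval_smul, eval_pow, eval_X, smul_eq_mul, mul_eq_zero] at h3
    rcases h3 with h3 | h3
    · exact hlc ((hf0 _).1 h3)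
    · have h5 := (hf0 _).1 (eq_zero_of_pow_eq_zero h3)
      have h6 := (hf0 _).1 hpv
      have h7 := Nat.dvd_gcd (Int.natCast_dvd.1 h5) (Int.natCast_dvd_natCast.1 h6)
      rw [t.reduced.gcd_eq_one] at h7
      exact hp.one_lt.ne' (Nat.dvd_one.1 h7)
  · refine ⟨f t.num / f v, ?_⟩
    have h1 := scaleRoots_eval₂_mul (p := P) f (f t.num / f v) v
    rw [mul_div_cancel₀ _ hpv, h3] at h1
    exact (mul_eq_zero.1 h1.symm).resolve_left (pow_ne_zero _ hpv)

/-- The counting bound for the specializations of `√P` when `P` is irreducible over `ℚ` of even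
degree. -/
lemma specializations_isBigO {P : ℤ[X]} {r : ℕ} (hr : 0 < r) (hre : Even r)
    (hPr : P.natDegree = r) (hirr : Irreducible (P.map (Int.castRingHom ℚ))) :
    ∃ α : ℝ, 0 < α ∧ α < 1 ∧
      (fun x : ℕ =>
        ({d : ℤ | SqfInt d ∧ |d| ≤ (x : ℤ) ∧
          ((∃ t₀ : ℚ, Polynomial.aeval t₀ P ≠ 0 ∧
              ∃ s : ℚ, s ≠ 0 ∧ (d : ℚ) * Polynomial.aeval t₀ P = s ^ 2) ∨
           (P.natDegree = r ∧
              ∃ s : ℚ, s ≠ 0 ∧ (d : ℚ) * (P.leadingCoeff : ℚ) = s ^ 2))}.ncard : ℝ))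
        =O[atTop] fun x : ℕ => (x : ℝ) * Real.log x ^ (-α) := by
  classical
  have hr2 : 2 ≤ P.natDegree := by
    obtain ⟨k, hk⟩ := hre
    omega
  obtain ⟨β, C, hβ, hdens⟩ := density_roots_lt_one P hirr hr2
  set G : ℕ → Prop := fun p => (p : ℤ) ∣ P.leadingCoeff ∨
    ∃ x : ZMod p, eval₂ (Int.castRingHom (ZMod p)) x P = 0 with hG
  obtain ⟨C', hC'⟩ := card_sqfWith_le G β C hdens
  refine ⟨min β (1 / 2), lt_min hβ (by norm_num), (min_le_right _ _).trans_lt (by norm_num), ?_⟩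
  have hlog : Tendsto (fun x : ℕ => Real.log x) atTop atTop :=
    Real.tendsto_log_atTop.comp tendsto_natCast_atTop_atTop
  refine IsBigO.of_bound (2 * |C'|) ?_
  filter_upwards [hC', hlog.eventually_ge_atTop 1] with x hx hl
  set E : Finset ℤ := (sqfWith G x).image (fun n : ℕ => (n : ℤ)) ∪
    (sqfWith G x).image (fun n : ℕ => -(n : ℤ)) with hE
  have hsub : {d : ℤ | SqfInt d ∧ |d| ≤ (x : ℤ) ∧
          ((∃ t₀ : ℚ, Polynomial.aeval t₀ P ≠ 0 ∧
              ∃ s : ℚ, s ≠ 0 ∧ (d : ℚ) * Polynomial.aeval t₀ P = s ^ 2) ∨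
           (P.natDegree = r ∧
              ∃ s : ℚ, s ≠ 0 ∧ (d : ℚ) * (P.leadingCoeff : ℚ) = s ^ 2))} ⊆ (E : Set ℤ) := by
    rintro d ⟨⟨hd0, -, hsq⟩, hdx, hspec⟩
    have hmem : d.natAbs ∈ sqfWith G x := by
      refine mem_sqfWith.2 ⟨⟨Int.natAbs_pos.2 hd0, ?_⟩, ?_, ?_⟩
      · rw [Int.abs_eq_natAbs] at hdx
        exact_mod_cast hdx
      · rw [Nat.squarefree_iff_prime_squarefree]
        intro p hp hdvd
        refine hsq p hp ?_
        rw [Int.dvd_natAbs.symm, sq]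
        exact_mod_cast hdvd
      · intro p hp hdvd
        exact root_mod_of_specialization hre hPr hspec hp (Int.natCast_dvd.2 hdvd) (hsq p hp)
    rw [hE, Finset.mem_coe, Finset.mem_union, Finset.mem_image, Finset.mem_image]
    rcases Int.natAbs_eq d with h | h
    · exact Or.inl ⟨_, hmem, h.symm⟩
    · exact Or.inr ⟨_, hmem, h.symm⟩
  have hcard : E.card ≤ 2 * (sqfWith G x).card := by
    refine (Finset.card_union_le _ _).trans ?_
    rw [two_mul]
    exact add_le_add Finset.card_image_le Finset.card_image_le
  have hncard := (Set.ncard_le_ncard hsub E.finite_toSet).trans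
    ((Set.ncard_coe_finset E).le.trans hcard)
  have hncard' := (Nat.cast_le (α := ℝ)).2 hncard
  rw [Real.norm_of_nonneg (Nat.cast_nonneg _), Real.norm_of_nonneg (by positivity)]
  refine hncard'.trans ?_
  push_cast
  rw [mul_assoc]
  refine mul_le_mul_of_nonneg_left (hx.trans ?_) zero_le_two
  refine mul_le_mul (le_abs_self _) ?_ (by positivity) (abs_nonneg _)
  refine mul_le_mul_of_nonneg_left ?_ (Nat.cast_nonneg _)
  exact Real.rpow_le_rpow_of_exponent_le hl (neg_le_neg (min_le_left _ _))

/-! ### Heights and factorizations of integer polynomials -/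

/-- The integer polynomials of degree less than `n` and height at most `H`. -/
noncomputable def box (n H : ℕ) : Finset ℤ[X] := by
  classical
  exact (Fintype.piFinset fun _ : Fin n => Finset.Icc (-(H : ℤ)) H).image
    fun v => ∑ i : Fin n, monomial (i : ℕ) (v i)

lemma coeff_sum_monomial {n : ℕ} (v : Fin n → ℤ) (j : ℕ) :
    (∑ i : Fin n, monomial (i : ℕ) (v i)).coeff j = if h : j < n then v ⟨j, h⟩ else 0 := by
  rw [finsetSum_coeff]
  simp only [coeff_monomial]
  split_ifs with h
  · rw [Finset.sum_eq_single (⟨j, h⟩ : Fin n)]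
    · simp
    · intro b _ hb
      exact if_neg fun hbj => hb (Fin.ext hbj)
    · simp
  · exact Finset.sum_eq_zero fun b _ => if_neg fun (hbj : (b : ℕ) = j) => h (hbj ▸ b.2)

lemma mem_box {n H : ℕ} {P : ℤ[X]} :
    P ∈ box n H ↔ (∀ i, n ≤ i → P.coeff i = 0) ∧ HeightLE P H := by
  classical
  simp only [box, Finset.mem_image, Fintype.mem_piFinset, Finset.mem_Icc]
  constructor
  · rintro ⟨v, hv, rfl⟩
    refine ⟨fun i hi => ?_, fun i => ?_⟩
    · rw [coeff_sum_monomial, dif_neg hi.not_gt]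
    · rw [coeff_sum_monomial]
      split_ifs with h
      · exact abs_le.2 (hv _)
      · simp
  · rintro ⟨h0, h1⟩
    refine ⟨fun i => P.coeff i, fun i => abs_le.1 (h1 i), ?_⟩
    ext j
    rw [coeff_sum_monomial]
    split_ifs with h
    · rfl
    · exact (h0 j (not_lt.1 h)).symm

lemma card_box (n H : ℕ) : (box n H).card = (2 * H + 1) ^ n := by
  classical
  rw [box, Finset.card_image_of_injective, Fintype.card_piFinset]
  · simp only [Int.card_Icc, Finset.prod_const, Finset.card_univ, Fintype.card_fin]
    congr 1
    omega
  · intro v w hvw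
    funext i
    have := congrArg (fun P : ℤ[X] => P.coeff i) hvw
    dsimp only at this
    rwa [coeff_sum_monomial, coeff_sum_monomial, dif_pos i.2, dif_pos i.2] at this

lemma mem_box_of_natDegree_le {n H : ℕ} {P : ℤ[X]} (hd : P.natDegree ≤ n) (hP : HeightLE P H) :
    P ∈ box (n + 1) H :=
  mem_box.2 ⟨fun _ hi => coeff_eq_zero_of_natDegree_lt (by omega), hP⟩

/-- The height of an integer polynomial. -/
def ht (P : ℤ[X]) : ℕ := P.support.sup fun i => (P.coeff i).natAbs

lemma natAbs_coeff_le_ht (P : ℤ[X]) (i : ℕ) : (P.coeff i).natAbs ≤ ht P := by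
  by_cases h : i ∈ P.support
  · exact Finset.le_sup (f := fun i => (P.coeff i).natAbs) h
  · simp [notMem_support_iff.1 h]

lemma heightLE_iff {P : ℤ[X]} {H : ℕ} : HeightLE P H ↔ ht P ≤ H := by
  constructor
  · intro h
    refine Finset.sup_le fun i _ => ?_
    have := h i
    rw [Int.abs_eq_natAbs] at this
    exact_mod_cast this
  · intro h i
    rw [Int.abs_eq_natAbs]
    exact_mod_cast (natAbs_coeff_le_ht P i).trans h

lemma ht_pos {P : ℤ[X]} (hP : P ≠ 0) : 1 ≤ ht P :=
  (Int.natAbs_pos.2 (leadingCoeff_ne_zero.2 hP)).trans_le (natAbs_coeff_le_ht P P.natDegree)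

lemma ht_le_mahlerMeasure (P : ℤ[X]) :
    (ht P : ℝ) ≤ 2 ^ P.natDegree * (P.map (Int.castRingHom ℂ)).mahlerMeasure := by
  have hb : ∀ i, ((P.coeff i).natAbs : ℝ) ≤
      2 ^ P.natDegree * (P.map (Int.castRingHom ℂ)).mahlerMeasure := by
    intro i
    have h1 := norm_coeff_le_choose_mul_mahlerMeasure i (P.map (Int.castRingHom ℂ))
    rw [coeff_map, natDegree_map_eq_of_injective (RingHom.injective_int (Int.castRingHom ℂ)),
      eq_intCast, Complex.norm_intCast] at h1
    rw [Nat.cast_natAbs, Int.cast_abs]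
    refine h1.trans (mul_le_mul_of_nonneg_right ?_ (mahlerMeasure_nonneg _))
    exact_mod_cast Nat.choose_le_two_pow _ _
  by_cases hP : P = 0
  · simp [hP, ht]
  · obtain ⟨i, -, hi⟩ := Finset.exists_mem_eq_sup P.support (nonempty_support_iff.2 hP)
      fun i => (P.coeff i).natAbs
    rw [ht, hi]
    exact hb i

/-- Gelfond's inequality, from the multiplicativity of the Mahler measure. -/
lemma ht_mul_ht_le (Q R : ℤ[X]) (hQ : Q ≠ 0) (hR : R ≠ 0) :
    ht Q * ht R ≤ 2 ^ (Q * R).natDegree * ((Q * R).natDegree + 1) * ht (Q * R) := by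
  have h1 := ht_le_mahlerMeasure Q
  have h2 := ht_le_mahlerMeasure R
  set φ := Int.castRingHom ℂ
  have h3 : ((Q * R).map φ).mahlerMeasure ≤ ((Q * R).natDegree + 1) * ht (Q * R) := by
    refine (mahlerMeasure_le_sum_norm_coeff _).trans ?_
    rw [sum_def]
    refine (Finset.sum_le_card_nsmul _ _ (ht (Q * R) : ℝ) fun i _ => ?_).trans ?_
    · rw [coeff_map, eq_intCast, Complex.norm_intCast, ← Int.cast_abs, ← Nat.cast_natAbs]
      exact_mod_cast natAbs_coeff_le_ht _ i
    · rw [nsmul_eq_mul]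
      refine mul_le_mul_of_nonneg_right ?_ (Nat.cast_nonneg _)
      have := card_supp_le_succ_natDegree ((Q * R).map φ)
      have h4 := natDegree_map_le (f := φ) (p := Q * R)
      exact_mod_cast this.trans (by omega)
  rw [Polynomial.map_mul, mahlerMeasure_mul] at h3
  have h5 : (ht Q : ℝ) * ht R ≤
      2 ^ (Q * R).natDegree * (((Q * R).natDegree + 1) * ht (Q * R)) := by
    calc (ht Q : ℝ) * ht R ≤ (2 ^ Q.natDegree * (Q.map φ).mahlerMeasure) *
          (2 ^ R.natDegree * (R.map φ).mahlerMeasure) :=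
          mul_le_mul h1 h2 (Nat.cast_nonneg _)
            (mul_nonneg (by positivity) (mahlerMeasure_nonneg _))
      _ = 2 ^ (Q * R).natDegree * ((Q.map φ).mahlerMeasure * (R.map φ).mahlerMeasure) := by
          rw [natDegree_mul hQ hR, pow_add]; ring
      _ ≤ _ := mul_le_mul_of_nonneg_left h3 (by positivity)
  rw [mul_assoc]
  exact_mod_cast h5

lemma exists_factor_of_not_irreducible {P : ℤ[X]} (hdeg : 1 ≤ P.natDegree)
    (h : ¬ Irreducible (P.map (Int.castRingHom ℚ))) :
    ∃ Q R : ℤ[X], P = Q * R ∧ 1 ≤ Q.natDegree ∧ 1 ≤ R.natDegree := by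
  have hP0 : P ≠ 0 := by rintro rfl; simp at hdeg
  have hc : P.content ≠ 0 := content_eq_zero_iff.not.2 hP0
  have hprim := P.isPrimitive_primPart
  have h1 : ¬ Irreducible P.primPart := by
    rw [IsPrimitive.Int.irreducible_iff_irreducible_map_cast hprim]
    intro h2
    refine h ?_
    rw [P.eq_C_content_mul_primPart, Polynomial.map_mul, map_C]
    refine (irreducible_isUnit_mul (isUnit_C.2 (IsUnit.mk0 _ ?_))).2 h2
    simpa using hc
  have hnu : ¬ IsUnit P.primPart := fun hu => by
    have := natDegree_eq_zero_of_isUnit hu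
    rw [natDegree_primPart] at this
    omega
  have hpos : ∀ a : ℤ[X], a ∣ P.primPart → ¬ IsUnit a → 1 ≤ a.natDegree := by
    intro a ha hau
    by_contra hlt
    have h3 : a = C (a.coeff 0) := eq_C_of_natDegree_eq_zero (by omega)
    rw [h3] at hau ha
    exact hau (isUnit_C.2 (isPrimitive_iff_isUnit_of_C_dvd.1 hprim _ ha))
  rw [irreducible_iff] at h1
  push Not at h1
  obtain ⟨a, b, hab, ha, hb⟩ := h1 hnu
  refine ⟨C P.content * a, b, ?_, ?_, hpos b (hab ▸ dvd_mul_left _ _) hb⟩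
  · rw [mul_assoc, ← hab]; exact P.eq_C_content_mul_primPart
  · rw [natDegree_C_mul hc]
    exact hpos a (hab ▸ dvd_mul_right _ _) ha

/-! ### Counting polynomials of bounded height -/

/-- The integer polynomials of degree `r` and height at most `H` that are reducible over `ℚ`. -/
def reducibleSet (r H : ℕ) : Set ℤ[X] :=
  {P | P.natDegree = r ∧ HeightLE P H ∧ ¬ Irreducible (P.map (Int.castRingHom ℚ))}

/-- A reducible `P` is a product `Q * R` with `ht Q * ht R ≪ H`. Splitting according to the
degree `k ≤ r / 2` of `Q` and the dyadic range `[2 ^ j, 2 ^ (j + 1))` of `ht Q` leaves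
`O(H ^ r)` pairs for each `(k, j)`. -/
lemma ncard_reducibleSet_le (r H : ℕ) (hr : 1 ≤ r) (hH : 1 ≤ H) :
    (reducibleSet r H).ncard ≤
      (r + 1) * (Nat.log 2 (2 ^ r * (r + 1) * H) + 1) * (15 * (2 ^ r * (r + 1) * H)) ^ r := by
  classical
  set N := 2 ^ r * (r + 1) * H with hN
  have hN1 : 1 ≤ N := Nat.one_le_iff_ne_zero.2 (by positivity)
  set I : Finset (ℕ × ℕ) := ((Finset.range (r + 1)) ×ˢ (Finset.range (Nat.log 2 N + 1))).filter
    fun a => 1 ≤ a.1 ∧ 2 * a.1 ≤ r with hI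
  set U : Finset ℤ[X] := I.biUnion fun a =>
    (box (a.1 + 1) (2 ^ (a.2 + 1)) ×ˢ box (r - a.1 + 1) (N / 2 ^ a.2)).image
      fun q => q.1 * q.2 with hU
  have hsub : reducibleSet r H ⊆ (U : Set ℤ[X]) := by
    rintro P ⟨hdeg, hht, hred⟩
    obtain ⟨Q, R, hP, hQ, hR⟩ := exists_factor_of_not_irreducible (by omega) hred
    wlog hQR : Q.natDegree ≤ R.natDegree generalizing Q R
    · exact this R Q (by rw [hP, mul_comm]) hR hQ (by omega)
    have hQ0 : Q ≠ 0 := by rintro rfl; simp at hQ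
    have hR0 : R ≠ 0 := by rintro rfl; simp at hR
    have hsum : Q.natDegree + R.natDegree = r := by
      rw [← natDegree_mul hQ0 hR0, ← hP, hdeg]
    have hle : ht Q * ht R ≤ N := by
      refine (ht_mul_ht_le Q R hQ0 hR0).trans ?_
      rw [← hP, hdeg]
      exact Nat.mul_le_mul_left _ (heightLE_iff.1 hht)
    have hQ1 := ht_pos hQ0
    have hR1 := ht_pos hR0
    set j := Nat.log 2 (ht Q) with hj
    have hj1 : 2 ^ j ≤ ht Q := Nat.pow_log_le_self 2 (by omega)
    have hj2 : ht Q < 2 ^ (j + 1) := Nat.lt_pow_succ_log_self (by norm_num) _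
    rw [hU, Finset.mem_coe, Finset.mem_biUnion]
    refine ⟨(Q.natDegree, j), ?_, ?_⟩
    · simp only [hI, Finset.mem_filter, Finset.mem_product, Finset.mem_range]
      refine ⟨⟨by omega, ?_⟩, hQ, by omega⟩
      exact Nat.lt_succ_of_le (Nat.log_mono_right ((Nat.le_mul_of_pos_right _ hR1).trans hle))
    · refine Finset.mem_image.2 ⟨(Q, R), Finset.mem_product.2 ⟨?_, ?_⟩, hP.symm⟩
      · exact mem_box_of_natDegree_le le_rfl (heightLE_iff.2 hj2.le)
      · refine mem_box_of_natDegree_le (by dsimp only; omega) (heightLE_iff.2 ?_)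
        rw [Nat.le_div_iff_mul_le (by positivity), mul_comm]
        exact (Nat.mul_le_mul_right _ hj1).trans hle
  have hterm : ∀ a ∈ I, ((box (a.1 + 1) (2 ^ (a.2 + 1)) ×ˢ
      box (r - a.1 + 1) (N / 2 ^ a.2)).image fun q => q.1 * q.2).card ≤ (15 * N) ^ r := by
    rintro ⟨k, j⟩ ha
    simp only [hI, Finset.mem_filter, Finset.mem_product, Finset.mem_range] at ha
    obtain ⟨⟨-, hj⟩, hk1, hk2⟩ := ha
    refine Finset.card_image_le.trans ?_
    rw [Finset.card_product, card_box, card_box]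
    dsimp only
    set D := N / 2 ^ j with hD
    have hjN : 2 ^ j ≤ N := Nat.pow_le_of_le_log (by omega) (by omega)
    have hD1 : 1 ≤ D := (Nat.le_div_iff_mul_le (by positivity)).2 (by simpa using hjN)
    have hDN : 2 ^ j * D ≤ N := Nat.mul_div_le _ _
    have hDN' : D ≤ N := Nat.div_le_self _ _
    have h1 : 2 * 2 ^ (j + 1) + 1 ≤ 5 * 2 ^ j := by
      have := Nat.one_le_two_pow (n := j)
      rw [pow_succ]; omega
    have hexp : r - k + 1 = (k + 1) + (r - 2 * k) := by omega
    calc (2 * 2 ^ (j + 1) + 1) ^ (k + 1) * (2 * D + 1) ^ (r - k + 1)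
        ≤ (5 * 2 ^ j) ^ (k + 1) * (3 * D) ^ (r - k + 1) :=
          Nat.mul_le_mul (Nat.pow_le_pow_left h1 _) (Nat.pow_le_pow_left (by omega) _)
      _ = (15 * (2 ^ j * D)) ^ (k + 1) * (3 * D) ^ (r - 2 * k) := by
          rw [hexp, pow_add (3 * D), ← mul_assoc, ← mul_pow]
          congr 2
          ring
      _ ≤ (15 * N) ^ (k + 1) * (15 * N) ^ (r - 2 * k) :=
          Nat.mul_le_mul (Nat.pow_le_pow_left (by omega) _) (Nat.pow_le_pow_left (by omega) _)
      _ = (15 * N) ^ (k + 1 + (r - 2 * k)) := (pow_add _ _ _).symm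
      _ ≤ (15 * N) ^ r := Nat.pow_le_pow_right (by omega) (by omega)
  refine (Set.ncard_le_ncard hsub U.finite_toSet).trans ?_
  rw [Set.ncard_coe_finset]
  refine (Finset.card_biUnion_le_card_mul _ _ _ hterm).trans ?_
  refine Nat.mul_le_mul_right _ ((Finset.card_filter_le _ _).trans ?_)
  rw [Finset.card_product, Finset.card_range, Finset.card_range]

/-- The nonzero integer polynomials of degree at most `r` and height at most `H` whose content is
not squarefree. -/
def nonSqfSet (r H : ℕ) : Set ℤ[X] :=
  {P | P ≠ 0 ∧ P.natDegree ≤ r ∧ HeightLE P H ∧ ¬ Squarefree P.content}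

/-- The count is at most `∑_{q ≥ 2} (3 H / q ^ 2) ^ (r + 1)`, over those `q` with `q ^ 2 ≤ H`; it is
compared with the number `≥ (2 H) ^ (r + 1)` of all polynomials. -/
lemma ncard_nonSqfSet_le (r H : ℕ) (hr : 1 ≤ r) :
    ((nonSqfSet r H).ncard : ℝ) ≤ 9 / 16 * (2 * H) ^ (r + 1) := by
  classical
  -- `I` is the set of `q` for which `q + 2` may have its square dividing the content.
  set I : Finset ℕ := (Finset.range H).filter fun q => (q + 2) ^ 2 ≤ H with hI
  set U : Finset ℤ[X] := I.biUnion fun q =>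
    (box (r + 1) (H / (q + 2) ^ 2)).image fun Q => C (((q + 2) ^ 2 : ℕ) : ℤ) * Q with hU
  have hsub : nonSqfSet r H ⊆ (U : Set ℤ[X]) := by
    rintro P ⟨hP0, hdeg, hht, hsq⟩
    have hc0 : P.content ≠ 0 := content_eq_zero_iff.not.2 hP0
    rw [← Int.squarefree_natAbs, Nat.squarefree_iff_prime_squarefree] at hsq
    push Not at hsq
    obtain ⟨p, hp, hpd⟩ := hsq
    obtain ⟨q, rfl⟩ : ∃ q, p = q + 2 := ⟨p - 2, by have := hp.two_le; omega⟩
    have hdvd : C (((q + 2) ^ 2 : ℕ) : ℤ) ∣ P := by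
      rw [C_dvd_iff_dvd_coeff]
      intro i
      rw [sq]
      exact (Int.natCast_dvd.2 hpd).trans (content_dvd_coeff i)
    obtain ⟨Q, hQ⟩ := hdvd
    have hQ0 : Q ≠ 0 := by rintro rfl; simp [hQ] at hP0
    have hne : (((q + 2) ^ 2 : ℕ) : ℤ) ≠ 0 := by positivity
    have hhQ : ht Q ≤ H / (q + 2) ^ 2 := by
      refine Finset.sup_le fun i _ => ?_
      rw [Nat.le_div_iff_mul_le (by positivity), mul_comm]
      have h1 := (natAbs_coeff_le_ht P i).trans (heightLE_iff.1 hht)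
      rwa [hQ, coeff_C_mul, Int.natAbs_mul, Int.natAbs_natCast] at h1
    have hqH : (q + 2) ^ 2 ≤ H := by
      have := (ht_pos hQ0).trans hhQ
      rw [Nat.le_div_iff_mul_le (by positivity)] at this
      omega
    rw [hU, Finset.mem_coe, Finset.mem_biUnion]
    refine ⟨q, Finset.mem_filter.2 ⟨Finset.mem_range.2 (by nlinarith), hqH⟩,
      Finset.mem_image.2 ⟨Q, mem_box_of_natDegree_le ?_ (heightLE_iff.2 hhQ), hQ.symm⟩⟩
    rwa [hQ, natDegree_C_mul hne] at hdeg
  have hterm : ∀ q ∈ I, (((box (r + 1) (H / (q + 2) ^ 2)).image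
      fun Q => C (((q + 2) ^ 2 : ℕ) : ℤ) * Q).card : ℝ) ≤
      9 / 16 * (2 * H) ^ (r + 1) * (1 / (q + 1) - 1 / (q + 2)) := by
    intro q hq
    have hqH := (Finset.mem_filter.1 hq).2
    have h1 : ((2 * (H / (q + 2) ^ 2) + 1 : ℕ) : ℝ) ≤ 3 / (2 * ((q : ℝ) + 2) ^ 2) * (2 * H) := by
      have h2 : 1 ≤ H / (q + 2) ^ 2 := (Nat.le_div_iff_mul_le (by positivity)).2 (by omega)
      have h3 : ((H / (q + 2) ^ 2 : ℕ) : ℝ) ≤ H / ((q : ℝ) + 2) ^ 2 := by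
        refine Nat.cast_div_le.trans (le_of_eq ?_)
        push_cast; rfl
      calc ((2 * (H / (q + 2) ^ 2) + 1 : ℕ) : ℝ) ≤ ((3 * (H / (q + 2) ^ 2) : ℕ) : ℝ) := by
            exact_mod_cast (by omega)
        _ ≤ 3 * (H / ((q : ℝ) + 2) ^ 2) := by push_cast; linarith
        _ = _ := by field_simp
    have hq0 : (0 : ℝ) ≤ q := Nat.cast_nonneg _
    have hsmall : 3 / (2 * ((q : ℝ) + 2) ^ 2) ≤ 1 := by
      rw [div_le_one (by positivity)]; nlinarith
    have hpow : (3 / (2 * ((q : ℝ) + 2) ^ 2)) ^ (r + 1) ≤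
        9 / 16 * (1 / (q + 1) - 1 / (q + 2)) := by
      calc (3 / (2 * ((q : ℝ) + 2) ^ 2)) ^ (r + 1) ≤ (3 / (2 * ((q : ℝ) + 2) ^ 2)) ^ 2 :=
            pow_le_pow_of_le_one (by positivity) hsmall (by omega)
        _ = 9 / 4 * (1 / ((q : ℝ) + 2) ^ 2) * (1 / ((q : ℝ) + 2) ^ 2) := by
            field_simp
            ring
        _ ≤ 9 / 4 * (1 / 4) * (1 / (((q : ℝ) + 1) * (q + 2))) := by
            have h4 : 1 / ((q : ℝ) + 2) ^ 2 ≤ 1 / 4 :=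
              one_div_le_one_div_of_le (by norm_num) (by nlinarith)
            have h5 : 1 / ((q : ℝ) + 2) ^ 2 ≤ 1 / (((q : ℝ) + 1) * (q + 2)) :=
              one_div_le_one_div_of_le (by positivity) (by nlinarith)
            gcongr
        _ = _ := by field_simp; ring
    calc _ ≤ ((box (r + 1) (H / (q + 2) ^ 2)).card : ℝ) := by exact_mod_cast Finset.card_image_le
      _ = ((2 * (H / (q + 2) ^ 2) + 1 : ℕ) : ℝ) ^ (r + 1) := by rw [card_box, Nat.cast_pow]
      _ ≤ (3 / (2 * ((q : ℝ) + 2) ^ 2) * (2 * H)) ^ (r + 1) :=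
          pow_le_pow_left₀ (Nat.cast_nonneg _) h1 _
      _ = (3 / (2 * ((q : ℝ) + 2) ^ 2)) ^ (r + 1) * (2 * H) ^ (r + 1) := mul_pow _ _ _
      _ ≤ (9 / 16 * (1 / (q + 1) - 1 / (q + 2))) * (2 * H) ^ (r + 1) :=
          mul_le_mul_of_nonneg_right hpow (by positivity)
      _ = _ := by ring
  have htel : ∑ q ∈ I, ((1 : ℝ) / (q + 1) - 1 / (q + 2)) ≤ 1 := by
    have hnn : ∀ q : ℕ, (0 : ℝ) ≤ 1 / (q + 1) - 1 / (q + 2) := fun q =>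
      sub_nonneg.2 (one_div_le_one_div_of_le (by positivity) (by linarith))
    refine (Finset.sum_le_sum_of_subset_of_nonneg (Finset.filter_subset _ _)
      fun q _ _ => hnn q).trans ?_
    have h6 := Finset.sum_range_sub' (fun q : ℕ => (1 : ℝ) / (q + 1)) H
    have h7 : ∑ q ∈ Finset.range H, ((1 : ℝ) / (q + 1) - 1 / (q + 2)) =
        1 - 1 / ((H : ℝ) + 1) := by
      simp only [Nat.cast_zero, zero_add, div_one] at h6
      rw [← h6]
      refine Finset.sum_congr rfl fun q _ => ?_
      push_cast
      ring
    rw [h7]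
    have : (0 : ℝ) ≤ 1 / ((H : ℝ) + 1) := by positivity
    linarith
  have h8 := (Set.ncard_le_ncard hsub U.finite_toSet).trans_eq (Set.ncard_coe_finset U)
  have h9 := h8.trans Finset.card_biUnion_le
  calc ((nonSqfSet r H).ncard : ℝ) ≤ ∑ q ∈ I, (((box (r + 1) (H / (q + 2) ^ 2)).image
      fun Q => C (((q + 2) ^ 2 : ℕ) : ℤ) * Q).card : ℝ) := by exact_mod_cast h9
    _ ≤ ∑ q ∈ I, 9 / 16 * (2 * H) ^ (r + 1) * ((1 : ℝ) / (q + 1) - 1 / (q + 2)) :=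
        Finset.sum_le_sum hterm
    _ = 9 / 16 * (2 * H) ^ (r + 1) * ∑ q ∈ I, ((1 : ℝ) / (q + 1) - 1 / (q + 2)) :=
        (Finset.mul_sum _ _ _).symm
    _ ≤ _ := mul_le_of_le_one_right (by positivity) htel

/-- Polynomials with vanishing coefficient of degree `r` or reducible over `ℚ` are rare. -/
lemma card_bad_le (r : ℕ) (hr : 1 ≤ r) : ∃ A : ℝ, 0 ≤ A ∧ ∀ᶠ H : ℕ in atTop,
    ((box r H).card : ℝ) + (reducibleSet r H).ncard ≤ A * H ^ r * Real.log H := by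
  have hlog : Tendsto (fun x : ℕ => Real.log x) atTop atTop :=
    Real.tendsto_log_atTop.comp tendsto_natCast_atTop_atTop
  set c := 2 ^ r * (r + 1) with hc
  refine ⟨3 ^ r + 5 * (r + 1) * (15 * c) ^ r, by positivity, ?_⟩
  filter_upwards [hlog.eventually_ge_atTop 1, eventually_ge_atTop c, eventually_ge_atTop 1]
    with H hl hcH hH
  have hH0 : (0 : ℝ) < H := by exact_mod_cast hH
  have h1 : ((box r H).card : ℝ) ≤ 3 ^ r * H ^ r * Real.log H := by
    rw [card_box]
    refine le_trans ?_ (le_mul_of_one_le_right (by positivity) hl)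
    rw [← mul_pow]
    push_cast
    refine pow_le_pow_left₀ (by positivity) ?_ _
    have : (1 : ℝ) ≤ H := by exact_mod_cast hH
    linarith
  have hN0 : c * H ≠ 0 := by positivity
  have h2 : (Nat.log 2 (c * H) : ℝ) ≤ 4 * Real.log H := by
    refine (Real.natLog_le_logb _ _).trans ?_
    rw [Real.logb, div_le_iff₀ (Real.log_pos (by norm_num))]
    have h3 : Real.log ((c * H : ℕ) : ℝ) ≤ 2 * Real.log H := by
      have h4 : Real.log ((c * H : ℕ) : ℝ) ≤ Real.log ((H : ℝ) ^ 2) := by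
        refine Real.log_le_log (by exact_mod_cast Nat.pos_of_ne_zero hN0) ?_
        have : c * H ≤ H ^ 2 := by rw [sq]; exact Nat.mul_le_mul_right _ hcH
        exact_mod_cast this
      rwa [Real.log_pow] at h4
    have h5 := Real.log_two_gt_d9
    push_cast at h3 ⊢
    nlinarith
  have h6 : ((reducibleSet r H).ncard : ℝ) ≤
      (r + 1) * (Nat.log 2 (c * H) + 1) * (15 * (c * H)) ^ r := by
    exact_mod_cast ncard_reducibleSet_le r H hr hH
  have h7 : ((reducibleSet r H).ncard : ℝ) ≤
      (r + 1) * (5 * Real.log H) * (15 * (c * H)) ^ r := by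
    refine h6.trans ?_
    gcongr
    linarith
  calc _ ≤ 3 ^ r * H ^ r * Real.log H + (r + 1) * (5 * Real.log H) * (15 * (c * H)) ^ r :=
        add_le_add h1 h7
    _ = _ := by
        rw [← mul_assoc 15, mul_pow]
        ring

/-- The polynomials of degree exactly `r` in `P2Set r` that are irreducible over `ℚ`. -/
def irrSet (r : ℕ) : Set ℤ[X] :=
  {P | P ∈ P2Set r ∧ P.natDegree = r ∧ Irreducible (P.map (Int.castRingHom ℚ))}

lemma finite_P2Set_inter (r H : ℕ) : (P2Set r ∩ {P | HeightLE P H}).Finite :=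
  (box (r + 1) H).finite_toSet.subset fun P hP =>
    mem_box_of_natDegree_le (by rcases hP.1.1 with h | h <;> omega) hP.2

lemma finite_reducibleSet (r H : ℕ) : (reducibleSet r H).Finite :=
  (box (r + 1) H).finite_toSet.subset fun _ hP => mem_box_of_natDegree_le hP.1.le hP.2.1

lemma finite_nonSqfSet (r H : ℕ) : (nonSqfSet r H).Finite :=
  (box (r + 1) H).finite_toSet.subset fun _ hP => mem_box_of_natDegree_le hP.2.1 hP.2.2.1

lemma ncard_diff_irrSet_le (r H : ℕ) (hr : 1 ≤ r) :
    ((P2Set r ∩ {P | HeightLE P H}) \ (irrSet r ∩ {P | HeightLE P H})).ncard ≤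
      (box r H).card + (reducibleSet r H).ncard := by
  have hsub : (P2Set r ∩ {P | HeightLE P H}) \ (irrSet r ∩ {P | HeightLE P H}) ⊆
      (box r H : Set ℤ[X]) ∪ reducibleSet r H := by
    rintro P ⟨⟨hP, hH⟩, hnot⟩
    rcases hP.1 with h | h
    · exact Or.inr ⟨h, hH, fun hirr => hnot ⟨⟨hP, h, hirr⟩, hH⟩⟩
    · left
      rw [Finset.mem_coe, ← Nat.sub_add_cancel hr]
      exact mem_box_of_natDegree_le h.le hH
  refine (Set.ncard_le_ncard hsub
    ((box r H).finite_toSet.union (finite_reducibleSet r H))).trans ?_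
  refine (Set.ncard_union_le _ _).trans ?_
  rw [Set.ncard_coe_finset]

/-- All but few polynomials lie in `P2Set r`, since those irreducible over `ℚ` are separable. -/
lemma pow_le_ncard_P2Set_add (r H : ℕ) :
    (2 * H + 1) ^ (r + 1) ≤ (P2Set r ∩ {P | HeightLE P H}).ncard +
      ((box r H).card + (reducibleSet r H).ncard) + (nonSqfSet r H).ncard := by
  have hsub : (box (r + 1) H : Set ℤ[X]) ⊆ ((P2Set r ∩ {P | HeightLE P H}) ∪
      ((box r H : Set ℤ[X]) ∪ reducibleSet r H)) ∪ nonSqfSet r H := by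
    intro P hP
    obtain ⟨h0, hH⟩ := mem_box.1 hP
    by_cases hr0 : P.coeff r = 0
    · refine Or.inl (Or.inr (Or.inl (mem_box.2 ⟨fun i hi => ?_, hH⟩)))
      rcases hi.eq_or_lt with rfl | hi
      · exact hr0
      · exact h0 i hi
    have hdeg : P.natDegree = r := le_antisymm
      (natDegree_le_iff_coeff_eq_zero.2 fun i hi => h0 i hi) (le_natDegree_of_ne_zero hr0)
    have hP0 : P ≠ 0 := by rintro rfl; simp at hr0
    by_cases hirr : Irreducible (P.map (Int.castRingHom ℚ))
    · by_cases hsq : Squarefree P.content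
      · exact Or.inl (Or.inl ⟨⟨Or.inl hdeg, hP0, hirr.separable, hsq⟩, hH⟩)
      · exact Or.inr ⟨hP0, hdeg.le, hH, hsq⟩
    · exact Or.inl (Or.inr (Or.inr ⟨hdeg, hH, hirr⟩))
  rw [← card_box, ← Set.ncard_coe_finset (box (r + 1) H)]
  refine (Set.ncard_le_ncard hsub (((finite_P2Set_inter r H).union
    ((box r H).finite_toSet.union (finite_reducibleSet r H))).union
    (finite_nonSqfSet r H))).trans ?_
  refine (Set.ncard_union_le _ _).trans (Nat.add_le_add_right ?_ _)
  refine (Set.ncard_union_le _ _).trans (Nat.add_le_add_left ?_ _)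
  refine (Set.ncard_union_le _ _).trans ?_
  rw [Set.ncard_coe_finset]

lemma irrSet_density (r : ℕ) (hr : 1 ≤ r) :
    (fun H : ℕ => (1 : ℝ) -
        ((irrSet r ∩ {P | HeightLE P H}).ncard : ℝ) /
          ((P2Set r ∩ {P | HeightLE P H}).ncard : ℝ)) =O[atTop]
      fun H : ℕ => Real.log H / Real.sqrt H := by
  obtain ⟨A, hA, hbad⟩ := card_bad_le r hr
  have hlog : Tendsto (fun x : ℕ => Real.log x) atTop atTop :=
    Real.tendsto_log_atTop.comp tendsto_natCast_atTop_atTop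
  have hsmall : ∀ᶠ H : ℕ in atTop, A * Real.log H ≤ 3 / 16 * H := by
    have h1 := (Real.isLittleO_log_id_atTop.comp_tendsto
      (tendsto_natCast_atTop_atTop (R := ℝ))).def (c := 3 / 16 / (A + 1)) (by positivity)
    filter_upwards [h1, hlog.eventually_ge_atTop 0] with H hH hl
    simp only [Function.comp_apply, id, Real.norm_natCast, Real.norm_of_nonneg hl] at hH
    rw [div_mul_eq_mul_div, le_div_iff₀ (by positivity)] at hH
    nlinarith
  refine IsBigO.of_bound (4 * A) ?_
  filter_upwards [hbad, hsmall, hlog.eventually_ge_atTop 0, eventually_ge_atTop 1]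
    with H hb hs hl hH
  have hH1 : (1 : ℝ) ≤ H := by exact_mod_cast hH
  have hH0 : (0 : ℝ) < H := by linarith
  set p := (P2Set r ∩ {P | HeightLE P H}).ncard with hp
  set b := (box r H).card + (reducibleSet r H).ncard with hbdef
  replace hb : (b : ℝ) ≤ A * H ^ r * Real.log H := by rw [hbdef]; push_cast; exact hb
  have hlow : (H : ℝ) ^ (r + 1) / 4 ≤ p := by
    have h1 : ((2 * H + 1 : ℕ) : ℝ) ^ (r + 1) ≤ p + b + (nonSqfSet r H).ncard := by
      exact_mod_cast pow_le_ncard_P2Set_add r H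
    have h2 := ncard_nonSqfSet_le r H hr
    have h3 : (2 * (H : ℝ)) ^ (r + 1) ≤ ((2 * H + 1 : ℕ) : ℝ) ^ (r + 1) := by
      push_cast
      exact pow_le_pow_left₀ (by positivity) (by linarith) _
    have h4 : (b : ℝ) ≤ 3 / 16 * (H : ℝ) ^ (r + 1) := by
      calc (b : ℝ) ≤ A * H ^ r * Real.log H := hb
        _ = H ^ r * (A * Real.log H) := by ring
        _ ≤ H ^ r * (3 / 16 * H) := by gcongr
        _ = _ := by ring
    have h5 : (H : ℝ) ^ (r + 1) ≤ (2 * (H : ℝ)) ^ (r + 1) :=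
      pow_le_pow_left₀ hH0.le (by linarith) _
    linarith
  have hp0 : (0 : ℝ) < p := lt_of_lt_of_le (by positivity) hlow
  have hsub : irrSet r ∩ {P | HeightLE P H} ⊆ P2Set r ∩ {P | HeightLE P H} :=
    Set.inter_subset_inter_left _ fun P hP => hP.1
  have hcard := Set.ncard_sdiff_add_ncard_of_subset hsub (finite_P2Set_inter r H)
  have hdiff := ncard_diff_irrSet_le r H hr
  rw [← hp] at hcard
  have hcard' : (p : ℝ) = (((P2Set r ∩ {P | HeightLE P H}) \
      (irrSet r ∩ {P | HeightLE P H})).ncard : ℝ) + (irrSet r ∩ {P | HeightLE P H}).ncard := by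
    exact_mod_cast hcard.symm
  have heq : (1 : ℝ) - ((irrSet r ∩ {P | HeightLE P H}).ncard : ℝ) / p =
      (((P2Set r ∩ {P | HeightLE P H}) \ (irrSet r ∩ {P | HeightLE P H})).ncard : ℝ) / p := by
    rw [eq_div_iff hp0.ne', sub_mul, one_mul, div_mul_cancel₀ _ hp0.ne']
    linarith
  rw [heq, Real.norm_of_nonneg (by positivity), Real.norm_of_nonneg (by positivity)]
  have hdb : (((P2Set r ∩ {P | HeightLE P H}) \
      (irrSet r ∩ {P | HeightLE P H})).ncard : ℝ) ≤ b := by exact_mod_cast hdiff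
  have hsqrt : Real.sqrt H ≤ H := by
    rw [Real.sqrt_le_left hH0.le]
    nlinarith
  calc _ ≤ (A * H ^ r * Real.log H) / ((H : ℝ) ^ (r + 1) / 4) :=
        div_le_div₀ (by positivity) (hdb.trans hb) (by positivity) hlow
    _ = 4 * A * (Real.log H / H) := by
        field_simp
        ring
    _ ≤ 4 * A * (Real.log H / Real.sqrt H) := by
        have := Real.sqrt_pos.2 hH0
        gcongr

end Helpers

theorem stmt1 (r : ℕ) (hr : 0 < r) (hre : Even r) :
    ∃ S ⊆ P2Set r,
      ((fun H : ℕ => (1 : ℝ) -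
          ((S ∩ {P | HeightLE P H}).ncard : ℝ) /
            ((P2Set r ∩ {P | HeightLE P H}).ncard : ℝ)) =O[atTop]
        fun H : ℕ => Real.log H / Real.sqrt H) ∧
      ∀ P ∈ S, ∃ α : ℝ, 0 < α ∧ α < 1 ∧
        (fun x : ℕ =>
            ({d : ℤ | SqfInt d ∧ |d| ≤ (x : ℤ) ∧
              ((∃ t₀ : ℚ, Polynomial.aeval t₀ P ≠ 0 ∧
                  ∃ s : ℚ, s ≠ 0 ∧ (d : ℚ) * Polynomial.aeval t₀ P = s ^ 2) ∨
               (P.natDegree = r ∧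
                  ∃ s : ℚ, s ≠ 0 ∧ (d : ℚ) * (P.leadingCoeff : ℚ) = s ^ 2))}.ncard : ℝ))
          =O[atTop] fun x : ℕ => (x : ℝ) * Real.log x ^ (-α) := by
  refine ⟨irrSet r, fun P hP => hP.1, irrSet_density r hr, ?_⟩
  rintro P ⟨-, hdeg, hirr⟩
  exact specializations_isBigO hr hre hdeg hirr
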